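/- arXiv:1606.05957 — 5 statements merged into one kernel-verified Lean document; each statement's English description precedes it below -/
import Mathlib

section
/- Let k = (k_1,…,k_s) be a sequence of positive integers and let γ, γ′ be faces of the ladder diagram Γ_k with γ ⊊ γ′ (strict inclusion of subgraphs). Then dim γ < dim γ′, i.e., |E(γ)| − |V(γ)| + 1 < |E(γ′)| − |V(γ′)| + 1. -/
open Classical

noncomputable section

/-- Partial sums of the (0-indexed) sequence `k`: `nseq k i = k 0 + ⋯ + k (i-1)`;
so `nseq k i` is the paper's `n_i` for the sequence `(k_1, …, k_s) = (k 0, …, k (s-1))`. -/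
def nseq (k : ℕ → ℕ) (i : ℕ) : ℕ := ∑ j ∈ Finset.range i, k j

/-- The set of terminal vertices `T_k = {(n_i, n - n_i) : 0 ≤ i ≤ s}` of the ladder diagram. -/
def terminals (s : ℕ) (k : ℕ → ℕ) : Set (ℕ × ℕ) :=
  {v | ∃ i ≤ s, v = (nseq k i, nseq k s - nseq k i)}

/-- The vertex set of the ladder diagram `Γ_k`. -/
def ladderV (s : ℕ) (k : ℕ → ℕ) : Set (ℕ × ℕ) :=
  {v | ∃ t ∈ terminals s k, v.1 ≤ t.1 ∧ v.2 ≤ t.2}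

/-- A unit grid step: one step to the right or one step up. -/
def gridStep (v w : ℕ × ℕ) : Prop :=
  w = (v.1 + 1, v.2) ∨ w = (v.1, v.2 + 1)

/-- The edge set of the ladder diagram `Γ_k`. -/
def ladderE (s : ℕ) (k : ℕ → ℕ) : Set ((ℕ × ℕ) × (ℕ × ℕ)) :=
  {e | e.1 ∈ ladderV s k ∧ e.2 ∈ ladderV s k ∧ gridStep e.1 e.2}

/-- A combinatorial (directed) graph in the grid `ℤ_{≥0} × ℤ_{≥0}`,
given by a set of vertices and a set of edges. -/
@[ext] structure LGraph where
  V : Set (ℕ × ℕ)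
  E : Set ((ℕ × ℕ) × (ℕ × ℕ))

/-- Subgraph inclusion order on grid graphs. -/
instance : PartialOrder LGraph where
  le γ γ' := γ.V ⊆ γ'.V ∧ γ.E ⊆ γ'.E
  le_refl γ := ⟨subset_rfl, subset_rfl⟩
  le_trans a b c h h' := ⟨h.1.trans h'.1, h.2.trans h'.2⟩
  le_antisymm a b h h' := LGraph.ext (subset_antisymm h.1 h'.1) (subset_antisymm h.2 h'.2)

/-- The ladder diagram `Γ_k` as a grid graph. -/
def ladder (s : ℕ) (k : ℕ → ℕ) : LGraph :=
  ⟨ladderV s k, ladderE s k⟩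

/-- A positive path: (the graph of) a shortest path in the ladder diagram `Γ_k`
from the origin `(0,0)` to a terminal vertex. -/
def IsPositivePath (s : ℕ) (k : ℕ → ℕ) (p : LGraph) : Prop :=
  ∃ (m : ℕ) (f : ℕ → ℕ × ℕ),
    f 0 = (0, 0) ∧ f m ∈ terminals s k ∧
    (∀ i < m, gridStep (f i) (f (i + 1))) ∧
    (∀ i ≤ m, f i ∈ ladderV s k) ∧
    p.V = {v | ∃ i ≤ m, v = f i} ∧
    p.E = {e | ∃ i < m, e = (f i, f (i + 1))}

/-- A face of the ladder diagram `Γ_k`: a subgraph which contains all terminal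
vertices and is a union of positive paths. -/
def IsLadderFace (s : ℕ) (k : ℕ → ℕ) (γ : LGraph) : Prop :=
  terminals s k ⊆ γ.V ∧
  ∃ P : Set LGraph, (∀ p ∈ P, IsPositivePath s k p) ∧
    γ.V = ⋃ p ∈ P, LGraph.V p ∧ γ.E = ⋃ p ∈ P, LGraph.E p

/-- The dimension (first Betti number) of a face of a ladder diagram:
`|E(γ)| - |V(γ)| + 1`. -/
def ldim (γ : LGraph) : ℤ :=
  (γ.E.ncard : ℤ) - (γ.V.ncard : ℤ) + 1

/-- The index set `I = {(i,j) : i,j ≥ 1, i+j ≤ n}` of the coordinates of a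
Gelfand–Cetlin pattern. -/
def GCIdx (n : ℕ) : Set (ℕ × ℕ) := {p | 1 ≤ p.1 ∧ 1 ≤ p.2 ∧ p.1 + p.2 ≤ n}

/-- The entries of a Gelfand–Cetlin pattern `x`, extended by the boundary
condition `x_{i, n+1-i} = λ_i`. -/
def gcEntry (n : ℕ) (lam : ℕ → ℝ) (x : GCIdx n → ℝ) (p : ℕ × ℕ) : ℝ :=
  if h : p ∈ GCIdx n then x ⟨p, h⟩ else lam p.1

/-- The Gelfand–Cetlin polytope `P_λ`: the set of points `(x_{i,j})_{(i,j) ∈ I}`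
with `x_{i,j+1} ≥ x_{i,j} ≥ x_{i+1,j}` for all `(i,j) ∈ I`, where
`x_{i,n+1-i} = λ_i`. -/
def GCPoly (n : ℕ) (lam : ℕ → ℝ) : Set (GCIdx n → ℝ) :=
  {x | ∀ i j : ℕ, (i, j) ∈ GCIdx n →
    gcEntry n lam x (i, j) ≤ gcEntry n lam x (i, j + 1) ∧
    gcEntry n lam x (i + 1, j) ≤ gcEntry n lam x (i, j)}

/-- The subset of `P_λ` obtained by turning the inequalities
`x_{i,j+1} ≥ x_{i,j}` for `(i,j) ∈ SH` and `x_{i,j} ≥ x_{i+1,j}` for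
`(i,j) ∈ SV` into equalities. -/
def GCFaceOf (n : ℕ) (lam : ℕ → ℝ) (SH SV : Set (ℕ × ℕ)) : Set (GCIdx n → ℝ) :=
  {x | x ∈ GCPoly n lam ∧
    (∀ p ∈ SH, gcEntry n lam x (p.1, p.2 + 1) = gcEntry n lam x p) ∧
    (∀ p ∈ SV, gcEntry n lam x p = gcEntry n lam x (p.1 + 1, p.2))}

/-- A face of the GC polytope: a nonempty solution set of the system obtained
by replacing some of the defining inequalities by equalities. -/
def IsGCFace (n : ℕ) (lam : ℕ → ℝ) (F : Set (GCIdx n → ℝ)) : Prop :=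
  F.Nonempty ∧ ∃ SH SV : Set (ℕ × ℕ), SH ⊆ GCIdx n ∧ SV ⊆ GCIdx n ∧
    F = GCFaceOf n lam SH SV

/-- The dimension of (a face of) the GC polytope: the dimension of its affine span. -/
def GCdim (n : ℕ) (F : Set (GCIdx n → ℝ)) : ℕ :=
  Module.finrank ℝ (affineSpan ℝ F).direction

/-- `lam` (1-indexed) is weakly decreasing with block structure `k`: it is
constant on each block `(n_{i-1}, n_i]` and strictly decreases between
consecutive blocks. -/
def HasBlockStructure (s : ℕ) (k : ℕ → ℕ) (lam : ℕ → ℝ) : Prop :=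
  (∀ i < s, ∀ a b : ℕ, nseq k i < a → a ≤ b → b ≤ nseq k (i + 1) → lam a = lam b) ∧
  (∀ i : ℕ, 1 ≤ i → i < s → lam (nseq k i + 1) < lam (nseq k i))

/-- The edge set of the graph `φ(F)` associated to a subset `F` of the GC polytope. -/
def phiE (n : ℕ) (lam : ℕ → ℝ) (F : Set (GCIdx n → ℝ)) :
    Set ((ℕ × ℕ) × (ℕ × ℕ)) :=
  {e | (∃ i < n, e = ((0, i), (0, i + 1)) ∨ e = ((i, 0), (i + 1, 0))) ∨
    (∃ i j : ℕ, (i, j) ∈ GCIdx n ∧ e = ((i - 1, j), (i, j)) ∧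
      ∃ x ∈ F, gcEntry n lam x (i, j) < gcEntry n lam x (i, j + 1)) ∨
    (∃ i j : ℕ, (i, j) ∈ GCIdx n ∧ e = ((i, j - 1), (i, j)) ∧
      ∃ x ∈ F, gcEntry n lam x (i + 1, j) < gcEntry n lam x (i, j))}

/-- The graph `φ(F)`: its edges are given by `phiE` and its vertices are the
endpoints of its edges. -/
def phiGC (n : ℕ) (lam : ℕ → ℝ) (F : Set (GCIdx n → ℝ)) : LGraph where
  V := {v | ∃ e ∈ phiE n lam F, v = e.1 ∨ v = e.2}
  E := phiE n lam F

/-- The map `ψ`: for a subgraph `γ`, the set of points of `P_λ` where the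
inequalities corresponding to the missing edges of `γ` become equalities. -/
def psiGC (n : ℕ) (lam : ℕ → ℝ) (γ : LGraph) : Set (GCIdx n → ℝ) :=
  {x | x ∈ GCPoly n lam ∧ ∀ i j : ℕ, (i, j) ∈ GCIdx n →
    (((i - 1, j), (i, j)) ∉ γ.E → gcEntry n lam x (i, j) = gcEntry n lam x (i, j + 1)) ∧
    (((i, j - 1), (i, j)) ∉ γ.E → gcEntry n lam x (i, j) = gcEntry n lam x (i + 1, j))}
/-- The recursively defined point `x̄` of the proof of Lemma 2.6 (bijectivity):
`x̄_{i,j} = λ_i` if `i + j = n + 1`, and for `i + j ≤ n` it is determined from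
`x̄_{i,j+1}` and `x̄_{i+1,j}` according to which of the two edges
`((i-1,j),(i,j))`, `((i,j-1),(i,j))` belong to `E`. -/
def barX (n : ℕ) (lam : ℕ → ℝ) (E : Set ((ℕ × ℕ) × (ℕ × ℕ))) : ℕ → ℕ → ℝ
  | i, j =>
    if h1 : n + 1 ≤ i + j then lam i
    else if h2 : ((i - 1, j), (i, j)) ∈ E then
      if h3 : ((i, j - 1), (i, j)) ∈ E then
        (barX n lam E i (j + 1) + barX n lam E (i + 1) j) / 2
      else barX n lam E (i + 1) j
    else barX n lam E i (j + 1)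
  termination_by i j => n + 1 - (i + j)
  decreasing_by all_goals omega

/-- `α, β : ℕ → ℕ` encode an element
`w = ((α_1,β_1),…,(α_{s-1},β_{s-1})) ∈ W_{s-1}`, with the conventions
`α_0 = 0`, `β_0 = 1`, `α_s = 1`, `β_s = 0`. -/
def IsW (s : ℕ) (α β : ℕ → ℕ) : Prop :=
  (∀ i : ℕ, 1 ≤ i → i < s →
    (α i, β i) = (1, 0) ∨ (α i, β i) = (0, 1) ∨ (α i, β i) = (1, 1)) ∧
  α 0 = 0 ∧ β 0 = 1 ∧ α s = 1 ∧ β s = 0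

/-- The edge set of the subgraph `g_w` of `Γ_k`: the horizontal edge into the
terminal vertex `v_i` when `α_i = 1` and the vertical edge into `v_i` when
`β_i = 1`. -/
def gwE (s : ℕ) (k α β : ℕ → ℕ) : Set ((ℕ × ℕ) × (ℕ × ℕ)) :=
  {e | ∃ i ≤ s,
    (α i = 1 ∧
      e = ((nseq k i - 1, nseq k s - nseq k i), (nseq k i, nseq k s - nseq k i))) ∨
    (β i = 1 ∧
      e = ((nseq k i, nseq k s - nseq k i - 1), (nseq k i, nseq k s - nseq k i)))}

/-- The subgraph `g_w` of `Γ_k`. -/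
def gwGraph (s : ℕ) (k α β : ℕ → ℕ) : LGraph where
  V := {v | ∃ e ∈ gwE s k α β, v = e.1 ∨ v = e.2}
  E := gwE s k α β

/-- The interleaved sequence `r_w(k) * w̃` of length `2s - 1` (0-indexed):
entry `2j` is `k''_{j+1} = k_{j+1} + 1 - α_{j+1} - β_j` and entry `2j + 1` is
`w̃_{j+1} = α_{j+1} β_{j+1}`. -/
def rstar (s : ℕ) (k α β : ℕ → ℕ) (t : ℕ) : ℕ :=
  if t % 2 = 0 then k (t / 2) + 1 - α (t / 2 + 1) - β (t / 2)
  else α (t / 2 + 1) * β (t / 2 + 1)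

/-- `α`-value of one of the three symbols `(1,0), (0,1), (1,1)`,
encoded as `0, 1, 2 : Fin 3` respectively. -/
def aW3 (c : Fin 3) : ℕ := if c = 1 then 0 else 1

/-- `β`-value of one of the three symbols `(1,0), (0,1), (1,1)`,
encoded as `0, 1, 2 : Fin 3` respectively. -/
def bW3 (c : Fin 3) : ℕ := if c = 0 then 0 else 1

/-- The function `α` of the element of `W_{s-1}` encoded by
`c : Fin (s-1) → Fin 3` (with the conventions `α_0 = 0`, `α_s = 1`). -/
def alph (s : ℕ) (c : Fin (s - 1) → Fin 3) (i : ℕ) : ℕ :=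
  if i = 0 then 0 else if h : i - 1 < s - 1 then aW3 (c ⟨i - 1, h⟩) else 1

/-- The function `β` of the element of `W_{s-1}` encoded by
`c : Fin (s-1) → Fin 3` (with the conventions `β_0 = 1`, `β_s = 0`). -/
def bet (s : ℕ) (c : Fin (s - 1) → Fin 3) (i : ℕ) : ℕ :=
  if i = 0 then 1 else if h : i - 1 < s - 1 then bW3 (c ⟨i - 1, h⟩) else 0

/-- The interleaved sequence `r_w(k) * w̃` (of length `2s - 1`, 0-indexed) for
the element `w ∈ W_{s-1}` encoded by `c`. -/
def newk (s : ℕ) (c : Fin (s - 1) → Fin 3) (k : ℕ → ℕ) (t : ℕ) : ℕ :=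
  if t % 2 = 0 then k (t / 2) + 1 - alph s c (t / 2 + 1) - bet s c (t / 2)
  else alph s c (t / 2 + 1) * bet s c (t / 2 + 1)

/-- `|w| = Σ_{i=1}^{s-1} α_i β_i` for the element `w ∈ W_{s-1}` encoded by `c`. -/
def wsize (s : ℕ) (c : Fin (s - 1) → Fin 3) : ℕ :=
  ∑ j ∈ Finset.range (s - 1), alph s c (j + 1) * bet s c (j + 1)

/-- The subgraph `g_w` of `Γ_k` for the element `w ∈ W_{s-1}` encoded by `c`. -/
def gwGraph3 (s : ℕ) (k : ℕ → ℕ) (c : Fin (s - 1) → Fin 3) : LGraph :=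
  gwGraph s k (alph s c) (bet s c)

/-- Union of two grid graphs (union of vertex sets and of edge sets). -/
def ugraph (γ δ : LGraph) : LGraph := ⟨γ.V ∪ δ.V, γ.E ∪ δ.E⟩

/-- The generating function `F_k(t) = Σ_{γ face of Γ_k} t^{dim γ}` of the
`f`-vector of the ladder diagram `Γ_k`, as a formal power series in `t`:
the coefficient of `t^d` is the number of faces of `Γ_k` of dimension `d`. -/
def fpol (s : ℕ) (k : ℕ → ℕ) : PowerSeries ℤ :=
  PowerSeries.mk fun d =>
    (Set.ncard {γ : LGraph | IsLadderFace s k γ ∧ ldim γ = (d : ℤ)} : ℤ)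

/-- The operator `Π_{i=1}^{s-1} (∂/∂x_i + ∂/∂x_{i+1} + t ∂/∂y_i)` applied to a
polynomial in the variables `x_1, x_2, … , y_1, y_2, …` (the variable `x_{i+1}`
is `Sum.inl i` and `y_{i+1}` is `Sum.inr i`) over `ℚ[t]`. -/
def Lfold (s : ℕ) (f : MvPolynomial (ℕ ⊕ ℕ) (Polynomial ℚ)) :
    MvPolynomial (ℕ ⊕ ℕ) (Polynomial ℚ) :=
  (List.range (s - 1)).foldl
    (fun g i =>
      MvPolynomial.pderiv (Sum.inl i) g + MvPolynomial.pderiv (Sum.inl (i + 1)) g +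
        (Polynomial.X : Polynomial ℚ) • MvPolynomial.pderiv (Sum.inr i) g) f

/-- The operator `D_w = Π_{i=1}^{s-1} (∂/∂x_i)^{1-α_i} (∂/∂x_{i+1})^{1-β_i}
(t ∂/∂y_i)^{α_i β_i}` for the element `w ∈ W_{s-1}` encoded by
`c : Fin (s-1) → Fin 3` (`0 ↦ (1,0)`, `1 ↦ (0,1)`, `2 ↦ (1,1)`). -/
def DfoldC (s : ℕ) (c : Fin (s - 1) → Fin 3)
    (f : MvPolynomial (ℕ ⊕ ℕ) (Polynomial ℚ)) : MvPolynomial (ℕ ⊕ ℕ) (Polynomial ℚ) :=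
  (List.finRange (s - 1)).foldl
    (fun g i =>
      if c i = 0 then MvPolynomial.pderiv (Sum.inl ((i : ℕ) + 1)) g
      else if c i = 1 then MvPolynomial.pderiv (Sum.inl (i : ℕ)) g
      else (Polynomial.X : Polynomial ℚ) • MvPolynomial.pderiv (Sum.inr (i : ℕ)) g) f

/-- The operator `D_w` for the element `w ∈ W_{s-1}` encoded by `α, β : ℕ → ℕ`. -/
def DfoldW (s : ℕ) (α β : ℕ → ℕ)
    (f : MvPolynomial (ℕ ⊕ ℕ) (Polynomial ℚ)) : MvPolynomial (ℕ ⊕ ℕ) (Polynomial ℚ) :=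
  (List.range (s - 1)).foldl
    (fun g j =>
      if α (j + 1) = 1 ∧ β (j + 1) = 1 then
        (Polynomial.X : Polynomial ℚ) • MvPolynomial.pderiv (Sum.inr j) g
      else if α (j + 1) = 1 then MvPolynomial.pderiv (Sum.inl (j + 1)) g
      else MvPolynomial.pderiv (Sum.inl j) g) f

/-- Substitution of `0` for all the variables `y_j = Sum.inr j`. -/
def setYzero :
    MvPolynomial (ℕ ⊕ ℕ) (Polynomial ℚ) →ₐ[Polynomial ℚ] MvPolynomial (ℕ ⊕ ℕ) (Polynomial ℚ) :=
  MvPolynomial.aeval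
    (Sum.elim (fun i => MvPolynomial.X (Sum.inl i)) fun _ => (0 : MvPolynomial (ℕ ⊕ ℕ) (Polynomial ℚ)))
end

theorem face_subset_aux (s : ℕ) (k : ℕ → ℕ) : ladderV s k ⊆ Set.Iic (nseq k s, nseq k s) := by
  rintro v ⟨t, ⟨i, hi, rfl⟩, h1, h2⟩
  have h : nseq k i ≤ nseq k s := by
    unfold nseq
    exact Finset.sum_le_sum_of_subset (Finset.range_mono hi)
  simp only [Set.mem_Iic, Prod.le_def]
  simp only at h1 h2
  omega

/-- Every vertex of a face lies on a positive path inside the face. -/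
theorem face_path_aux {s : ℕ} {k : ℕ → ℕ} {γ : LGraph} (h : IsLadderFace s k γ)
    {v : ℕ × ℕ} (hv : v ∈ γ.V) :
    ∃ (m : ℕ) (f : ℕ → ℕ × ℕ) (i : ℕ), i ≤ m ∧ f 0 = (0, 0) ∧ f m ∈ terminals s k ∧ f i = v ∧
      (∀ j ≤ m, f j ∈ γ.V) ∧ (∀ j < m, (f j, f (j + 1)) ∈ γ.E) := by
  obtain ⟨-, P, hP, hV, hE⟩ := h
  rw [hV] at hv
  simp only [Set.mem_iUnion] at hv
  obtain ⟨p, hp, hv⟩ := hv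
  obtain ⟨m, f, h0, hm, -, -, hpV, hpE⟩ := hP p hp
  rw [hpV] at hv
  obtain ⟨i, hi, rfl⟩ := hv
  refine ⟨m, f, i, hi, h0, hm, rfl, fun j hj => ?_, fun j hj => ?_⟩
  · rw [hV]
    simp only [Set.mem_iUnion]
    exact ⟨p, hp, by rw [hpV]; exact ⟨j, hj, rfl⟩⟩
  · rw [hE]
    simp only [Set.mem_iUnion]
    exact ⟨p, hp, by rw [hpE]; exact ⟨j, hj, rfl⟩⟩

/-- The endpoints of an edge of a face are vertices of the face and of the ladder. -/
theorem face_edge_aux {s : ℕ} {k : ℕ → ℕ} {γ : LGraph} (h : IsLadderFace s k γ)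
    {e : (ℕ × ℕ) × (ℕ × ℕ)} (he : e ∈ γ.E) :
    e.1 ∈ γ.V ∧ e.2 ∈ γ.V := by
  obtain ⟨-, P, hP, hV, hE⟩ := h
  rw [hE] at he
  simp only [Set.mem_iUnion] at he
  obtain ⟨p, hp, he⟩ := he
  obtain ⟨m, f, h0, hm, -, -, hpV, hpE⟩ := hP p hp
  rw [hpE] at he
  obtain ⟨i, hi, rfl⟩ := he
  rw [hV]
  simp only [Set.mem_iUnion]
  exact ⟨⟨p, hp, by rw [hpV]; exact ⟨i, hi.le, rfl⟩⟩, ⟨p, hp, by rw [hpV]; exact ⟨i + 1, hi, rfl⟩⟩⟩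

theorem face_ladder_aux {s : ℕ} {k : ℕ → ℕ} {γ : LGraph} (h : IsLadderFace s k γ) :
    γ.V ⊆ ladderV s k := by
  obtain ⟨-, P, hP, hV, hE⟩ := h
  intro v hv
  rw [hV] at hv
  simp only [Set.mem_iUnion] at hv
  obtain ⟨p, hp, hv⟩ := hv
  obtain ⟨m, f, h0, hm, -, hl, hpV, hpE⟩ := hP p hp
  rw [hpV] at hv
  obtain ⟨i, hi, rfl⟩ := hv
  exact hl i hi

/-- If `γ` and `γ'` are faces of the ladder diagram `Γ_k`
with `γ ⊊ γ'`, then `dim γ < dim γ'`. -/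
theorem ldim_strict_mono (s : ℕ) (hs : 1 ≤ s) (k : ℕ → ℕ) (hk : ∀ i < s, 0 < k i)
    (γ γ' : LGraph) (hγ : IsLadderFace s k γ) (hγ' : IsLadderFace s k γ')
    (hlt : γ < γ') : ldim γ < ldim γ' := by
  have hV : γ.V ⊆ γ'.V := hlt.le.1
  have hE : γ.E ⊆ γ'.E := hlt.le.2
  have finV : γ'.V.Finite :=
    (Set.finite_Iic _).subset ((face_ladder_aux hγ').trans (face_subset_aux s k))
  have finE : γ'.E.Finite :=
    (finV.prod finV).subset fun e he => ⟨(face_edge_aux hγ' he).1, (face_edge_aux hγ' he).2⟩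
  -- the origin is a vertex of the smaller face
  have horig : ((0, 0) : ℕ × ℕ) ∈ γ.V := by
    have ht : (nseq k 0, nseq k s - nseq k 0) ∈ γ.V := hγ.1 ⟨0, Nat.zero_le _, rfl⟩
    obtain ⟨m, f, i, hi, h0, -, -, hfV, -⟩ := face_path_aux hγ ht
    exact h0 ▸ hfV 0 (Nat.zero_le _)
  -- there is a new edge whose head is an old vertex
  have hnew : ∃ e ∈ γ'.E \ γ.E, e.2 ∈ γ.V := by
    by_cases hVV : γ'.V ⊆ γ.V
    · have : ¬ γ'.E ⊆ γ.E := fun h => hlt.not_ge ⟨hVV, h⟩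
      obtain ⟨e, he, he'⟩ := Set.not_subset.1 this
      exact ⟨e, ⟨he, he'⟩, hVV (face_edge_aux hγ' he).2⟩
    · obtain ⟨v, hv, hv'⟩ := Set.not_subset.1 hVV
      obtain ⟨m, f, i, hi, -, hm, rfl, -, hfE⟩ := face_path_aux hγ' hv
      by_contra! hcon
      have key : ∀ j, i ≤ j → j ≤ m → f j ∉ γ.V := by
        intro j hj
        induction j, hj using Nat.le_induction with
        | base => exact fun _ => hv'
        | succ j hj ih =>
          intro hjm
          exact hcon (f j, f (j + 1)) ⟨hfE j hjm, fun h =>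
            ih (Nat.le_of_succ_le hjm) (face_edge_aux hγ h).1⟩
      exact key m hi le_rfl (hγ.1 hm)
  obtain ⟨e₀, he₀, he₀V⟩ := hnew
  set S : Set ((ℕ × ℕ) × (ℕ × ℕ)) := {e ∈ γ'.E \ γ.E | e.2 ∉ γ.V} with hS
  have finD : (γ'.E \ γ.E).Finite := finE.subset Set.diff_subset
  have hSsub : S ⊂ γ'.E \ γ.E :=
    ⟨fun e he => he.1, fun h => (h he₀).2 he₀V⟩
  have h1 : S.ncard < (γ'.E \ γ.E).ncard := Set.ncard_lt_ncard hSsub finD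
  have finS : S.Finite := finD.subset hSsub.1
  have h2 : (γ'.V \ γ.V).ncard ≤ S.ncard := by
    refine le_trans (Set.ncard_le_ncard (t := Prod.snd '' S) ?_ (finS.image _))
      (Set.ncard_image_le finS)
    rintro v ⟨hv, hv'⟩
    obtain ⟨m, f, i, hi, h0, -, rfl, -, hfE⟩ := face_path_aux hγ' hv
    cases i with
    | zero => exact absurd (h0 ▸ horig) hv'
    | succ i =>
      exact ⟨(f i, f (i + 1)), ⟨⟨hfE i hi, fun h => hv' (face_edge_aux hγ h).2⟩, hv'⟩, rfl⟩
  have h3 := Set.ncard_sdiff_add_ncard_of_subset hE finE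
  have h4 := Set.ncard_sdiff_add_ncard_of_subset hV finV
  unfold ldim
  omega
end

section
/- Let k = (k_1,…,k_s) be a sequence of positive integers, and let λ and λ′ be two weakly decreasing real sequences of length n = k_1+…+k_s, both having block structure k. Then there is an order isomorphism between the poset of faces of the Gelfand–Cetlin polytope P_λ and the poset of faces of P_{λ′} which preserves the dimension of faces; i.e., the face lattice of P_λ depends only on k. -/
open Classical

noncomputable section

theorem gcAux_blocks (s : ℕ) (k : ℕ → ℕ) (a : ℕ) (ha : 0 < a) (h : a ≤ nseq k s) :
    ∃ t < s, nseq k t < a ∧ a ≤ nseq k (t + 1) := by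
  induction s with
  | zero => simp [nseq] at h; omega
  | succ s ih =>
    by_cases h' : a ≤ nseq k s
    · obtain ⟨t, ht, h1⟩ := ih h'
      exact ⟨t, by omega, h1⟩
    · exact ⟨s, by omega, by omega, h⟩

/-- Consecutive entries of two sequences with the same block structure compare equally. -/
theorem gcAux_step (s : ℕ) (k : ℕ → ℕ) (lam lam' : ℕ → ℝ)
    (hlam : HasBlockStructure s k lam) (hlam' : HasBlockStructure s k lam')
    (i : ℕ) (hi : 1 ≤ i) (hin : i + 1 ≤ nseq k s) :
    (lam (i + 1) = lam i ∧ lam' (i + 1) = lam' i) ∨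
      (lam (i + 1) < lam i ∧ lam' (i + 1) < lam' i) := by
  obtain ⟨t, ht, h1, h2⟩ := gcAux_blocks s k (i + 1) (by omega) hin
  by_cases h : nseq k t < i
  · left
    exact ⟨(hlam.1 t ht i (i + 1) h (by omega) h2).symm,
      (hlam'.1 t ht i (i + 1) h (by omega) h2).symm⟩
  · right
    have h3 : i = nseq k t := by omega
    have h4 : 1 ≤ t := by
      rcases Nat.eq_zero_or_pos t with h5 | h5
      · subst h5; simp [nseq] at h3; omega
      · exact h5
    subst h3
    exact ⟨hlam.2 t h4 ht, hlam'.2 t h4 ht⟩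

/-- The piecewise linear map with slope `c` below `p` and slope `1` above `p`. -/
def gcAux_bend (p c : ℝ) (t : ℝ) : ℝ := t + (c - 1) * min (t - p) 0

theorem gcAux_bend_inv (p c : ℝ) (hc : 0 < c) (t : ℝ) :
    gcAux_bend p c⁻¹ (gcAux_bend p c t) = t := by
  unfold gcAux_bend
  rcases le_total (t - p) 0 with h | h
  · rw [min_eq_left h]
    have : t + (c - 1) * (t - p) - p = c * (t - p) := by ring
    rw [this, min_eq_left (mul_nonpos_of_nonneg_of_nonpos hc.le h)]
    field_simp
    ring
  · rw [min_eq_right h]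
    simp [h]

theorem gcAux_bend_mono (p c : ℝ) (hc : 0 < c) : StrictMono (gcAux_bend p c) := by
  intro a b hab
  unfold gcAux_bend
  rcases le_total (a - p) 0 with h | h <;> rcases le_total (b - p) 0 with h' | h'
  · rw [min_eq_left h, min_eq_left h']; nlinarith
  · rw [min_eq_left h, min_eq_right h']
    rcases h.lt_or_eq with h0 | h0
    · have := mul_neg_of_pos_of_neg hc h0
      linarith
    · rw [h0]; linarith
  · linarith
  · rw [min_eq_right h, min_eq_right h']; linarith

/-- There is an increasing bijection of the line carrying `a` to `b`. -/
theorem gcAux_exists_iso (a b : ℕ → ℝ) (N : ℕ)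
    (h : ∀ i, 1 ≤ i → i + 1 ≤ N → (a (i + 1) = a i ∧ b (i + 1) = b i) ∨
      (a (i + 1) < a i ∧ b (i + 1) < b i)) :
    ∃ g g' : ℝ → ℝ, StrictMono g ∧ StrictMono g' ∧ (∀ t, g' (g t) = t) ∧ (∀ t, g (g' t) = t) ∧
      (∀ i, 1 ≤ i → i ≤ N → g (a i) = b i) ∧ (∀ i, 1 ≤ i → i ≤ N → b N ≤ b i) := by
  induction N with
  | zero => exact ⟨id, id, strictMono_id, strictMono_id, by simp, by simp,
      by intro i h1 h2; omega, by intro i h1 h2; omega⟩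
  | succ N ih =>
    obtain ⟨g, g', hg, hg', h1, h2, h3, h4⟩ := ih (fun i hi hi' => h i hi (by omega))
    rcases Nat.eq_zero_or_pos N with h0 | h0
    · subst h0
      refine ⟨fun t => t + (b 1 - a 1), fun t => t - (b 1 - a 1), ?_, ?_, ?_, ?_, ?_, ?_⟩
      · intro x y hxy; simpa using hxy
      · intro x y hxy; simpa using hxy
      · intro t; ring
      · intro t; ring
      · intro i hi hi'
        obtain rfl : i = 1 := by omega
        ring
      · intro i hi hi'
        obtain rfl : i = 1 := by omega
        simp
    · rcases h N h0 le_rfl with ⟨e1, e2⟩ | ⟨e1, e2⟩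
      · refine ⟨g, g', hg, hg', h1, h2, ?_, ?_⟩
        · intro i hi hi'
          rcases Nat.lt_or_ge N i with h5 | h5
          · obtain rfl : i = N + 1 := by omega
            rw [e1, e2]; exact h3 N h0 le_rfl
          · exact h3 i hi h5
        · intro i hi hi'
          rcases Nat.lt_or_ge N i with h5 | h5
          · obtain rfl : i = N + 1 := by omega
            exact le_rfl
          · rw [e2]; exact h4 i hi h5
      · have q1 : g (a (N + 1)) - b N < 0 := by
          have := hg e1
          rw [h3 N h0 le_rfl] at this
          linarith
        have q2 : b (N + 1) - b N < 0 := by linarith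
        have hc : 0 < (b (N + 1) - b N) / (g (a (N + 1)) - b N) := div_pos_of_neg_of_neg q2 q1
        set c := (b (N + 1) - b N) / (g (a (N + 1)) - b N) with hcdef
        have hc' : 0 < c⁻¹ := inv_pos.mpr hc
        refine ⟨fun t => gcAux_bend (b N) c (g t), fun t => g' (gcAux_bend (b N) c⁻¹ t),
          (gcAux_bend_mono _ _ hc).comp hg, hg'.comp (gcAux_bend_mono _ _ hc'), ?_, ?_, ?_, ?_⟩
        · intro t
          simp only [gcAux_bend_inv _ _ hc, h1]
        · intro t
          simp only [h2]
          have := gcAux_bend_inv (b N) c⁻¹ hc' t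
          rwa [inv_inv] at this
        · intro i hi hi'
          rcases Nat.lt_or_ge N i with h5 | h5
          · obtain rfl : i = N + 1 := by omega
            simp only [gcAux_bend]
            rw [min_eq_left q1.le]
            have : c * (g (a (N + 1)) - b N) = b (N + 1) - b N := by
              rw [hcdef]; exact div_mul_cancel₀ _ q1.ne
            linarith
          · have := h4 i hi h5
            simp only [gcAux_bend]
            rw [h3 i hi h5, min_eq_right (by linarith)]
            ring
        · intro i hi hi'
          rcases Nat.lt_or_ge N i with h5 | h5
          · obtain rfl : i = N + 1 := by omega
            exact le_rfl
          · have := h4 i hi h5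
            linarith

/-- Direction of the affine span of a polyhedron: the vectors annihilated by
all functionals that vanish identically on it. -/
theorem gcAux_direction {V ι : Type*} [AddCommGroup V] [Module ℝ V] [Finite ι]
    (l : ι → V → ℝ) (L : ι → V →ₗ[ℝ] ℝ) (hL : ∀ r x v, l r (x + v) = l r x + L r v)
    (T : Set ι) (F : Set V) (hF : F = {x | (∀ r, 0 ≤ l r x) ∧ ∀ r ∈ T, l r x = 0})
    (hne : F.Nonempty) (v : V) :
    v ∈ (affineSpan ℝ F).direction ↔ ∀ r, (∀ x ∈ F, l r x = 0) → L r v = 0 := by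
  constructor
  · intro hv r hr
    have : (affineSpan ℝ F).direction ≤ LinearMap.ker (L r) := by
      rw [direction_affineSpan, vectorSpan_def, Submodule.span_le]
      rintro _ ⟨x, hx, y, hy, rfl⟩
      have h := hL r y (x - y)
      rw [add_sub_cancel, hr x hx, hr y hy] at h
      simp only [vsub_eq_sub, SetLike.mem_coe, LinearMap.mem_ker]
      linarith
    exact this hv
  · intro hv
    have hmid : ∀ x ∈ F, ∀ y ∈ F, ∃ z ∈ F, ∀ r, l r z = (l r x + l r y) / 2 := by
      intro x hx y hy
      have key : ∀ r, l r (x + (1 / 2 : ℝ) • (y - x)) = (l r x + l r y) / 2 := by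
        intro r
        have h := hL r x (y - x)
        rw [add_sub_cancel] at h
        rw [hL, map_smul, smul_eq_mul]
        linarith
      refine ⟨x + (1 / 2 : ℝ) • (y - x), ?_, key⟩
      rw [hF] at hx hy ⊢
      refine ⟨fun r => ?_, fun r hr => ?_⟩
      · rw [key]; have := hx.1 r; have := hy.1 r; linarith
      · rw [key, hx.2 r hr, hy.2 r hr]; simp
    have hnn : ∀ x ∈ F, ∀ r, 0 ≤ l r x := by
      intro x hx r; rw [hF] at hx; exact hx.1 r
    have hint : ∀ S : Set ι, S.Finite →
        ∃ z ∈ F, ∀ r ∈ S, (∃ x ∈ F, l r x ≠ 0) → 0 < l r z := by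
      intro S hS
      induction S, hS using Set.Finite.induction_on with
      | empty => obtain ⟨z, hz⟩ := hne; exact ⟨z, hz, by simp⟩
      | @insert a S _ _ ih =>
        obtain ⟨z, hz, hzS⟩ := ih
        by_cases ha : ∃ x ∈ F, l a x ≠ 0
        · obtain ⟨x, hx, hxa⟩ := ha
          obtain ⟨w, hw, hwl⟩ := hmid x hx z hz
          refine ⟨w, hw, ?_⟩
          intro r hr hr'
          have p1 := hnn x hx r
          have p2 := hnn z hz r
          rw [hwl]
          rcases hr with rfl | hr
          · have := lt_of_le_of_ne p1 (Ne.symm hxa)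
            linarith
          · have := hzS r hr hr'
            linarith
        · refine ⟨z, hz, ?_⟩
          intro r hr hr'
          rcases hr with rfl | hr
          · exact absurd hr' ha
          · exact hzS r hr hr'
    obtain ⟨z, hz, hzp⟩ := hint Set.univ Set.finite_univ
    have hev : ∀ᶠ ε : ℝ in nhdsWithin 0 (Set.Ioi 0), ∀ r, 0 ≤ l r (z + ε • v) := by
      rw [Filter.eventually_all]
      intro r
      by_cases hr : ∃ x ∈ F, l r x ≠ 0
      · have hp := hzp r trivial hr
        have hcont : Continuous (fun ε : ℝ => l r z + ε * L r v) := by fun_prop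
        have : ∀ᶠ ε : ℝ in nhds 0, 0 < l r z + ε * L r v :=
          hcont.continuousAt.eventually (lt_mem_nhds (by simpa using hp))
        filter_upwards [nhdsWithin_le_nhds this] with ε hε
        rw [hL, map_smul, smul_eq_mul]
        exact hε.le
      · push Not at hr
        refine Filter.Eventually.of_forall fun ε => ?_
        rw [hL, map_smul, hv r hr, hr z hz]; simp
    obtain ⟨ε, hε, hε0⟩ := (hev.and self_mem_nhdsWithin).exists
    have hε0' : (0 : ℝ) < ε := hε0
    have hmem : z + ε • v ∈ F := by
      have hz' := hz
      rw [hF] at hz' ⊢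
      refine ⟨hε, fun r hr => ?_⟩
      rw [hL, map_smul, hv r (fun x hx => by rw [hF] at hx; exact hx.2 r hr), hz'.2 r hr]
      simp
    have h1 := vsub_mem_vectorSpan ℝ hmem hz
    rw [← direction_affineSpan] at h1
    have h2 := Submodule.smul_mem _ ε⁻¹ h1
    simpa [smul_smul, inv_mul_cancel₀ hε0'.ne'] using h2

/-- Slack of the defining inequality `r` of the polytope. -/
def gcAux_slack (n : ℕ) (lam : ℕ → ℝ) (r : GCIdx n × Bool) (x : GCIdx n → ℝ) : ℝ :=
  if r.2 then gcEntry n lam x (r.1.1.1, r.1.1.2 + 1) - gcEntry n lam x r.1.1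
  else gcEntry n lam x r.1.1 - gcEntry n lam x (r.1.1.1 + 1, r.1.1.2)

theorem gcAux_entry_add (n : ℕ) (lam : ℕ → ℝ) (x v : GCIdx n → ℝ) (p : ℕ × ℕ) :
    gcEntry n lam (x + v) p = gcEntry n lam x p + gcEntry n (fun _ => 0) v p := by
  unfold gcEntry
  split_ifs <;> simp

theorem gcAux_entry_smul (n : ℕ) (c : ℝ) (v : GCIdx n → ℝ) (p : ℕ × ℕ) :
    gcEntry n (fun _ => 0) (c • v) p = c * gcEntry n (fun _ => 0) v p := by
  unfold gcEntry
  split_ifs <;> simp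

theorem gcAux_slack_add (n : ℕ) (lam : ℕ → ℝ) (r : GCIdx n × Bool) (x v : GCIdx n → ℝ) :
    gcAux_slack n lam r (x + v) = gcAux_slack n lam r x + gcAux_slack n (fun _ => 0) r v := by
  unfold gcAux_slack
  simp only [gcAux_entry_add]
  split_ifs <;> ring

/-- Linear part of the slack. -/
def gcAux_lin (n : ℕ) (r : GCIdx n × Bool) : (GCIdx n → ℝ) →ₗ[ℝ] ℝ where
  toFun := gcAux_slack n (fun _ => 0) r
  map_add' x y := gcAux_slack_add n _ r x y
  map_smul' c x := by
    unfold gcAux_slack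
    simp only [gcAux_entry_smul, RingHom.id_apply, smul_eq_mul]
    split_ifs <;> ring

theorem gcAux_finite (n : ℕ) : Finite (GCIdx n) := by
  apply Set.Finite.to_subtype
  apply (Set.finite_Icc ((0, 0) : ℕ × ℕ) (n, n)).subset
  rintro ⟨i, j⟩ ⟨h1, h2, h3⟩
  simp only [Set.mem_Icc, Prod.mk_le_mk] at *
  omega

theorem gcAux_face (n : ℕ) (lam : ℕ → ℝ) (SH SV : Set (ℕ × ℕ)) (hH : SH ⊆ GCIdx n)
    (hV : SV ⊆ GCIdx n) :
    GCFaceOf n lam SH SV = {x | (∀ r, 0 ≤ gcAux_slack n lam r x) ∧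
      ∀ r ∈ {r : GCIdx n × Bool | if r.2 then r.1.1 ∈ SH else r.1.1 ∈ SV},
        gcAux_slack n lam r x = 0} := by
  ext x
  simp only [GCFaceOf, GCPoly, Set.mem_setOf_eq]
  constructor
  · rintro ⟨h1, h2, h3⟩
    constructor
    · rintro ⟨⟨⟨i, j⟩, hr⟩, b⟩
      cases b <;> simp [gcAux_slack, h1 i j hr]
    · rintro ⟨⟨⟨i, j⟩, hr⟩, b⟩ hb
      cases b
      · have := h3 (i, j) (by simpa using hb)
        simp [gcAux_slack, this]
      · have := h2 (i, j) (by simpa using hb)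
        simp [gcAux_slack, this]
  · rintro ⟨h1, h2⟩
    refine ⟨?_, ?_, ?_⟩
    · intro i j hr
      have a := h1 (⟨(i, j), hr⟩, true)
      have b := h1 (⟨(i, j), hr⟩, false)
      simpa [gcAux_slack] using And.intro a b
    · rintro ⟨i, j⟩ hp
      have := h2 (⟨(i, j), hH hp⟩, true) (by simpa using hp)
      simp only [gcAux_slack, if_true] at this
      linarith
    · rintro ⟨i, j⟩ hp
      have := h2 (⟨(i, j), hV hp⟩, false) (by simpa using hp)
      simp [gcAux_slack] at this
      linarith

theorem gcAux_entry_map (n : ℕ) (lam lam' : ℕ → ℝ) (g : ℝ → ℝ)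
    (hg : ∀ i, 1 ≤ i → i ≤ n → g (lam i) = lam' i) (x : GCIdx n → ℝ) (p : ℕ × ℕ)
    (h1 : 1 ≤ p.1) (h2 : p.1 ≤ n) :
    gcEntry n lam' (fun i => g (x i)) p = g (gcEntry n lam x p) := by
  unfold gcEntry
  split_ifs
  · rfl
  · exact (hg _ h1 h2).symm

theorem gcAux_slack_map (n : ℕ) (lam lam' : ℕ → ℝ) (g : ℝ → ℝ) (hm : StrictMono g)
    (hg : ∀ i, 1 ≤ i → i ≤ n → g (lam i) = lam' i) (x : GCIdx n → ℝ) (r : GCIdx n × Bool) :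
    (0 ≤ gcAux_slack n lam' r (fun i => g (x i)) ↔ 0 ≤ gcAux_slack n lam r x) ∧
    (gcAux_slack n lam' r (fun i => g (x i)) = 0 ↔ gcAux_slack n lam r x = 0) := by
  obtain ⟨⟨⟨i, j⟩, hr⟩, b⟩ := r
  obtain ⟨h1, h2, h3⟩ := id hr
  simp only at h1 h2 h3
  cases b
  · simp only [gcAux_slack, Bool.false_eq_true, if_false]
    rw [gcAux_entry_map n lam lam' g hg x (i, j) h1 (by simp only; omega),
      gcAux_entry_map n lam lam' g hg x (i + 1, j) (by simp) (by simp only; omega)]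
    simp only [sub_nonneg, sub_eq_zero, hm.le_iff_le, hm.injective.eq_iff, and_self]
  · simp only [gcAux_slack, if_true]
    rw [gcAux_entry_map n lam lam' g hg x (i, j) h1 (by simp only; omega),
      gcAux_entry_map n lam lam' g hg x (i, j + 1) h1 (by simp only; omega)]
    simp only [sub_nonneg, sub_eq_zero, hm.le_iff_le, hm.injective.eq_iff, and_self]

/-- The image of a face is the face given by the same equalities. -/
theorem gcAux_image (n : ℕ) (lam lam' : ℕ → ℝ) (g g' : ℝ → ℝ) (hm : StrictMono g)
    (hr : ∀ t, g (g' t) = t)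
    (hg : ∀ i, 1 ≤ i → i ≤ n → g (lam i) = lam' i) (SH SV : Set (ℕ × ℕ)) (hH : SH ⊆ GCIdx n)
    (hV : SV ⊆ GCIdx n) :
    (fun (x : GCIdx n → ℝ) i => g (x i)) '' GCFaceOf n lam SH SV = GCFaceOf n lam' SH SV := by
  rw [gcAux_face n lam SH SV hH hV, gcAux_face n lam' SH SV hH hV]
  ext y
  constructor
  · rintro ⟨x, ⟨h1, h2⟩, rfl⟩
    exact ⟨fun r => (gcAux_slack_map n lam lam' g hm hg x r).1.2 (h1 r),
      fun r hr => (gcAux_slack_map n lam lam' g hm hg x r).2.2 (h2 r hr)⟩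
  · rintro ⟨h1, h2⟩
    have hy : (fun i => g (g' (y i))) = y := by simp [hr]
    refine ⟨fun i => g' (y i), ⟨fun r => ?_, fun r hr => ?_⟩, hy⟩
    · refine (gcAux_slack_map n lam lam' g hm hg _ r).1.1 ?_
      rw [hy]; exact h1 r
    · refine (gcAux_slack_map n lam lam' g hm hg _ r).2.1 ?_
      rw [hy]; exact h2 r hr

theorem gcAux_isFace_image (n : ℕ) (lam lam' : ℕ → ℝ) (g g' : ℝ → ℝ) (hm : StrictMono g)
    (hr : ∀ t, g (g' t) = t)
    (hg : ∀ i, 1 ≤ i → i ≤ n → g (lam i) = lam' i) (F : Set (GCIdx n → ℝ))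
    (hF : IsGCFace n lam F) :
    IsGCFace n lam' ((fun (x : GCIdx n → ℝ) i => g (x i)) '' F) := by
  obtain ⟨hne, SH, SV, hH, hV, rfl⟩ := hF
  exact ⟨hne.image _, SH, SV, hH, hV, gcAux_image n lam lam' g g' hm hr hg SH SV hH hV⟩

theorem gcAux_dim (n : ℕ) (lam : ℕ → ℝ) (F : Set (GCIdx n → ℝ)) (hF : IsGCFace n lam F)
    (v : GCIdx n → ℝ) :
    v ∈ (affineSpan ℝ F).direction ↔
      ∀ r, (∀ x ∈ F, gcAux_slack n lam r x = 0) → gcAux_lin n r v = 0 := by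
  have := gcAux_finite n
  obtain ⟨hne, SH, SV, hH, hV, hEq⟩ := hF
  rw [gcAux_face n lam SH SV hH hV] at hEq
  exact gcAux_direction (gcAux_slack n lam) (gcAux_lin n)
    (fun r x v => gcAux_slack_add n lam r x v) _ F hEq hne v

end

/-- Remark 1.11. If `λ` and `λ'` both have block structure
`k`, then the face lattices of the Gelfand–Cetlin polytopes `P_λ` and `P_λ'`
are isomorphic by a dimension-preserving order isomorphism; i.e. the face
lattice of `P_λ` depends only on `k`. -/
theorem gcFaceLattice_depends_only_on_k (s : ℕ) (hs : 1 ≤ s) (k : ℕ → ℕ)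
    (hk : ∀ i < s, 0 < k i) (lam lam' : ℕ → ℝ)
    (hlam : HasBlockStructure s k lam) (hlam' : HasBlockStructure s k lam') :
    ∃ Φ : {F : Set (GCIdx (nseq k s) → ℝ) // IsGCFace (nseq k s) lam F} →
          {F : Set (GCIdx (nseq k s) → ℝ) // IsGCFace (nseq k s) lam' F},
      Function.Bijective Φ ∧
      (∀ F F', F.1 ⊆ F'.1 ↔ (Φ F).1 ⊆ (Φ F').1) ∧
      (∀ F, GCdim (nseq k s) F.1 = GCdim (nseq k s) (Φ F).1) := by
  obtain ⟨g, g', hm, hm', h1, h2, h3, -⟩ := gcAux_exists_iso lam lam' (nseq k s)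
    (fun i hi hi' => gcAux_step s k lam lam' hlam hlam' i hi hi')
  have h3' : ∀ i, 1 ≤ i → i ≤ nseq k s → g' (lam' i) = lam i := by
    intro i hi hi'
    rw [← h3 i hi hi', h1]
  have hinj : Function.Injective (fun (x : GCIdx (nseq k s) → ℝ) i => g (x i)) := by
    intro x y hxy
    funext i
    exact hm.injective (congrFun hxy i)
  refine ⟨fun F => ⟨(fun (x : GCIdx (nseq k s) → ℝ) i => g (x i)) '' F.1,
    gcAux_isFace_image _ lam lam' g g' hm h2 h3 F.1 F.2⟩, ⟨?_, ?_⟩, ?_, ?_⟩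
  · intro F F' h
    exact Subtype.ext (hinj.image_injective (congrArg Subtype.val h))
  · intro G
    refine ⟨⟨_, gcAux_isFace_image _ lam' lam g' g hm' h1 h3' G.1 G.2⟩, Subtype.ext ?_⟩
    simp only [Set.image_image, h2, Set.image_id']
  · intro F F'
    exact (Set.image_subset_image_iff hinj).symm
  · intro F
    unfold GCdim
    have : (affineSpan ℝ F.1).direction = (affineSpan ℝ
        ((fun (x : GCIdx (nseq k s) → ℝ) i => g (x i)) '' F.1)).direction := by
      ext v
      rw [gcAux_dim _ lam F.1 F.2, gcAux_dim _ lam' _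
        (gcAux_isFace_image _ lam lam' g g' hm h2 h3 F.1 F.2)]
      simp only [Set.forall_mem_image,
        fun x r => (gcAux_slack_map (nseq k s) lam lam' g hm h3 x r).2]
    rw [this]
end

section
/- Let k = (k_1,…,k_s) be a sequence of positive integers with n = k_1+…+k_s, terminal vertices v_i = (n_i, n−n_i) for 0 ≤ i ≤ s, and let w = ((α_1,β_1),…,(α_{s−1},β_{s−1})) ∈ W_{s−1}, with the conventions α_s = β_0 = 1, α_0 = 0, β_s = 0. Let g_w be the subgraph of Γ_k with edge set {(v_i−(1,0), v_i) : α_i = 1} ∪ {(v_i−(0,1), v_i) : β_i = 1} and vertex set the endpoints of these edges, and let V_{n−1}(g_w) = V(g_w) ∩ {(x,y) : x+y = n−1}. Then the ladder diagram Γ_{r_w(k)*w̃} equals the ladder diagram whose set of terminal vertices is V_{n−1}(g_w); in particular, the set of terminal vertices of Γ_{r_w(k)*w̃} is V_{n−1}(g_w). -/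
open Classical

theorem rstar_aux (s : ℕ) (k : ℕ → ℕ) (hk : ∀ i < s, 0 < k i)
    (α β : ℕ → ℕ) (hW : IsW s α β) (j : ℕ) (hj : j < s) :
    nseq (rstar s k α β) (2 * j) + 1 = nseq k j + β j ∧
    nseq (rstar s k α β) (2 * j + 1) + α (j + 1) = nseq k (j + 1) := by
  obtain ⟨hw, ha0, hb0, has, hbs⟩ := hW
  have bd : ∀ i ≤ s, α i ≤ 1 ∧ β i ≤ 1 := by
    intro i hi
    rcases Nat.eq_zero_or_pos i with rfl | h0
    · omega
    rcases Nat.lt_or_ge i s with h | h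
    · have := hw i h0 h
      simp only [Prod.mk.injEq] at this
      omega
    · have : i = s := by omega
      subst this
      omega
  have hN : ∀ f i, nseq f (i + 1) = nseq f i + f i := by
    intro f i
    simp [nseq, Finset.sum_range_succ]
  have he : ∀ j, rstar s k α β (2 * j) = k j + 1 - α (j + 1) - β j := by
    intro j
    simp [rstar]
  have ho : ∀ j, rstar s k α β (2 * j + 1) = α (j + 1) * β (j + 1) := by
    intro j
    have h1 : (2 * j + 1) % 2 = 1 := by omega
    have h2 : (2 * j + 1) / 2 = j := by omega
    simp [rstar, h1, h2]
  have step : ∀ j < s, nseq (rstar s k α β) (2 * j) + 1 = nseq k j + β j →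
      nseq (rstar s k α β) (2 * j + 1) + α (j + 1) = nseq k (j + 1) := by
    intro j hj h
    rw [hN, hN, he]
    have := hk j hj
    have := bd j (by omega)
    have := bd (j + 1) (by omega)
    omega
  induction j with
  | zero =>
    have h : nseq (rstar s k α β) (2 * 0) + 1 = nseq k 0 + β 0 := by simp [nseq, hb0]
    exact ⟨h, step 0 hj h⟩
  | succ j ih =>
    have h2 := (ih (by omega)).2
    have h : nseq (rstar s k α β) (2 * (j + 1)) + 1 = nseq k (j + 1) + β (j + 1) := by
      have e : 2 * (j + 1) = 2 * j + 1 + 1 := by ring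
      rw [e, hN, ho]
      have := hw (j + 1) (by omega) hj
      simp only [Prod.mk.injEq] at this
      rcases this with ⟨h3, h4⟩ | ⟨h3, h4⟩ | ⟨h3, h4⟩ <;> rw [h3] at h2 <;> rw [h3, h4] <;> omega
    exact ⟨h, step _ hj h⟩

/-- Lemma 3.3. The ladder diagram `Γ_{r_w(k) * w̃}` equals
the ladder diagram whose set of terminal vertices is
`V_{n-1}(g_w) = V(g_w) ∩ {(x,y) : x + y = n - 1}`; in particular the set of
terminal vertices of `Γ_{r_w(k) * w̃}` is `V_{n-1}(g_w)`. -/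
theorem rstar_ladder_eq (s : ℕ) (hs : 1 ≤ s) (k : ℕ → ℕ) (hk : ∀ i < s, 0 < k i)
    (α β : ℕ → ℕ) (hW : IsW s α β) :
    terminals (2 * s - 1) (rstar s k α β) =
      (gwGraph s k α β).V ∩ {p : ℕ × ℕ | p.1 + p.2 = nseq k s - 1} ∧
    ladderV (2 * s - 1) (rstar s k α β) =
      {v : ℕ × ℕ | ∃ t ∈ (gwGraph s k α β).V ∩ {p : ℕ × ℕ | p.1 + p.2 = nseq k s - 1},
        v.1 ≤ t.1 ∧ v.2 ≤ t.2} := by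
  have aux := rstar_aux s k hk α β hW
  obtain ⟨hw, ha0, hb0, has, hbs⟩ := hW
  have mono : ∀ {i j}, i ≤ j → nseq k i ≤ nseq k j := by
    intro i j h
    exact Finset.sum_le_sum_of_subset (Finset.range_mono h)
  have hN : ∀ i, nseq k (i + 1) = nseq k i + k i := by
    intro i
    simp [nseq, Finset.sum_range_succ]
  have hlt : ∀ i < s, nseq k i < nseq k s := by
    intro i hi
    have h1 := mono (show i + 1 ≤ s from hi)
    have h2 := hk i hi
    have h3 := hN i
    omega
  have hpos : ∀ i, 1 ≤ i → 1 ≤ nseq k i := by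
    intro i hi
    have h1 : nseq k (0 + 1) ≤ nseq k i := mono hi
    have h2 := hk 0 (by omega)
    have h3 := hN 0
    omega
  have htot : nseq (rstar s k α β) (2 * s - 1) + 1 = nseq k s := by
    have h := (aux (s - 1) (by omega)).2
    have e1 : 2 * (s - 1) + 1 = 2 * s - 1 := by omega
    have e2 : s - 1 + 1 = s := by omega
    rw [e1, e2, has] at h
    exact h
  have main : terminals (2 * s - 1) (rstar s k α β) =
      (gwGraph s k α β).V ∩ {p : ℕ × ℕ | p.1 + p.2 = nseq k s - 1} := by
    -- membership of the two kinds of lower end points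
    have memA : ∀ i, 1 ≤ i → i ≤ s → α i = 1 →
        (nseq k i - 1, nseq k s - nseq k i) ∈
          (gwGraph s k α β).V ∩ {p : ℕ × ℕ | p.1 + p.2 = nseq k s - 1} := by
      intro i h1 h2 h3
      refine ⟨⟨_, ⟨i, h2, Or.inl ⟨h3, rfl⟩⟩, Or.inl rfl⟩, ?_⟩
      have := hpos i h1
      have := mono h2
      simp only [Set.mem_ofPred_eq]
      omega
    have memB : ∀ i, i < s → β i = 1 →
        (nseq k i, nseq k s - nseq k i - 1) ∈
          (gwGraph s k α β).V ∩ {p : ℕ × ℕ | p.1 + p.2 = nseq k s - 1} := by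
      intro i h2 h3
      refine ⟨⟨_, ⟨i, h2.le, Or.inr ⟨h3, rfl⟩⟩, Or.inl rfl⟩, ?_⟩
      have := hlt i h2
      simp only [Set.mem_ofPred_eq]
      omega
    have cas : ∀ i, 1 ≤ i → i < s →
        (α i = 1 ∧ β i = 0) ∨ (α i = 0 ∧ β i = 1) ∨ (α i = 1 ∧ β i = 1) := by
      intro i h1 h2
      simpa only [Prod.mk.injEq] using hw i h1 h2
    ext v
    constructor
    · rintro ⟨i, hi, rfl⟩
      obtain ⟨j, rfl | rfl⟩ := Nat.even_or_odd' i
      · have hj : j < s := by omega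
        have h := (aux j hj).1
        by_cases hb : β j = 1
        · convert memB j hj hb using 2 <;> omega
        · have hj1 : 1 ≤ j := by
            rcases Nat.eq_zero_or_pos j with rfl | h0
            · exact absurd hb0 hb
            · exact h0
          have hc := cas j hj1 hj
          have := hpos j hj1
          have := hlt j hj
          convert memA j hj1 hj.le (by omega) using 2 <;> omega
      · have hj : j < s := by omega
        have h := (aux j hj).2
        have := hpos (j + 1) (by omega)
        have := mono (show j + 1 ≤ s from hj)
        by_cases ha : α (j + 1) = 1
        · convert memA (j + 1) (by omega) hj ha using 2 <;> omega
        · have hjs : j + 1 < s := by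
            rcases Nat.lt_or_ge (j + 1) s with h0 | h0
            · exact h0
            · have e : j + 1 = s := by omega
              rw [e] at ha
              exact absurd has ha
          have hc := cas (j + 1) (by omega) hjs
          have := hlt _ hjs
          convert memB (j + 1) hjs (by omega) using 2 <;> omega
    · rintro ⟨⟨e, ⟨i, hi, ⟨h, rfl⟩ | ⟨h, rfl⟩⟩, rfl | rfl⟩, hv⟩
      · have hi1 : 1 ≤ i := by
          rcases Nat.eq_zero_or_pos i with rfl | h0
          · omega
          · exact h0
        obtain ⟨j, rfl⟩ : ∃ j, i = j + 1 := ⟨i - 1, by omega⟩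
        have hx := (aux j hi).2
        have := hpos _ hi1
        have := mono hi
        refine ⟨2 * j + 1, by omega, ?_⟩
        simp only [Prod.mk.injEq]
        omega
      · have := mono hi
        have := hpos s hs
        simp only [Set.mem_ofPred_eq] at hv
        omega
      · have his : i < s := by
          rcases Nat.lt_or_ge i s with h0 | h0
          · exact h0
          · have e : i = s := by omega
            subst e
            omega
        have hx := (aux i his).1
        have := hlt i his
        refine ⟨2 * i, by omega, ?_⟩
        simp only [Prod.mk.injEq]
        omega
      · have := mono hi
        have := hpos s hs
        simp only [Set.mem_ofPred_eq] at hv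
        omega
  refine ⟨main, ?_⟩
  rw [← main]
  rfl
end

section
/- Let s ≥ 1, k ∈ ℤ^s_{≥0}, e ∈ ℤ^{s−1}_{≥0}, and w ∈ W_{s−1}. Consider the monomial m = (Π_{i=1}^s x_i^{k_i}/k_i!) · (Π_{j=1}^{s−1} y_j^{e_j}/e_j!) over ℚ[t]. Then D_w(m) evaluated at y_1 = … = y_{s−1} = 0 equals t^{|w|} · Π_{i=1}^s x_i^{d_w(k)_i}/d_w(k)_i! if e = w̃ and all entries of d_w(k) are nonnegative, and equals 0 otherwise. -/
open Classical

noncomputable section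

/-- Divided power `x_i^n / n!`, zero for negative `n`. -/
def dvp (i : ℕ ⊕ ℕ) (n : ℤ) : MvPolynomial (ℕ ⊕ ℕ) (Polynomial ℚ) :=
  if n < 0 then 0
  else MvPolynomial.C (Polynomial.C ((n.toNat.factorial : ℚ)⁻¹)) * MvPolynomial.X i ^ n.toNat

theorem pderiv_dvp_same (i : ℕ ⊕ ℕ) (n : ℤ) :
    MvPolynomial.pderiv i (dvp i n) = dvp i (n - 1) := by
  rcases lt_or_ge n 0 with h | h
  · have h' : n - 1 < 0 := by omega
    simp [dvp, h, h']
  · obtain ⟨m, rfl⟩ := Int.eq_ofNat_of_zero_le h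
    cases m with
    | zero => simp [dvp]
    | succ m =>
      have h1 : ¬ ((m + 1 : ℕ) : ℤ) < 0 := by omega
      have h2 : ¬ (((m + 1 : ℕ) : ℤ) - 1) < 0 := by omega
      have h3 : (((m + 1 : ℕ) : ℤ) - 1).toNat = m := by omega
      have h4 : (((m + 1 : ℕ) : ℤ)).toNat = m + 1 := by omega
      unfold dvp
      rw [if_neg h1, if_neg h2, h3, h4, MvPolynomial.pderiv_C_mul, MvPolynomial.pderiv_pow,
        MvPolynomial.pderiv_X_self, mul_one, Nat.add_sub_cancel]
      have h5 : ((m + 1 : ℕ) : MvPolynomial (ℕ ⊕ ℕ) (Polynomial ℚ)) =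
          MvPolynomial.C (Polynomial.C ((m + 1 : ℕ) : ℚ)) := by simp
      rw [h5, ← mul_assoc, ← MvPolynomial.C_mul, ← Polynomial.C_mul]
      congr 3
      rw [Nat.factorial_succ]
      push_cast
      have : (m.factorial : ℚ) ≠ 0 := by positivity
      have : (m + 1 : ℚ) ≠ 0 := by positivity
      field_simp

theorem pderiv_dvp_ne (i j : ℕ ⊕ ℕ) (hij : j ≠ i) (n : ℤ) :
    MvPolynomial.pderiv i (dvp j n) = 0 := by
  unfold dvp
  split_ifs
  · simp
  · rw [MvPolynomial.pderiv_C_mul, MvPolynomial.pderiv_pow, MvPolynomial.pderiv_X_of_ne hij]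
    simp

theorem pderiv_prod_ne (i : ℕ ⊕ ℕ) (A : Finset (ℕ ⊕ ℕ)) (hA : i ∉ A) (v : ℕ ⊕ ℕ → ℤ) :
    MvPolynomial.pderiv i (∏ j ∈ A, dvp j (v j)) = 0 := by
  induction A using Finset.induction_on with
  | empty => simp
  | insert a A ha ih =>
    rw [Finset.mem_insert, not_or] at hA
    rw [Finset.prod_insert ha, MvPolynomial.pderiv_mul, ih hA.2,
      pderiv_dvp_ne i a (Ne.symm hA.1)]
    simp

theorem pderiv_prod_mem (i : ℕ ⊕ ℕ) (A : Finset (ℕ ⊕ ℕ)) (hA : i ∈ A) (v w : ℕ ⊕ ℕ → ℤ)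
    (h1 : w i = v i - 1) (h2 : ∀ j, j ≠ i → w j = v j) :
    MvPolynomial.pderiv i (∏ j ∈ A, dvp j (v j)) = ∏ j ∈ A, dvp j (w j) := by
  rw [← Finset.mul_prod_erase A _ hA, ← Finset.mul_prod_erase A (fun j => dvp j (w j)) hA,
    MvPolynomial.pderiv_mul, pderiv_prod_ne i _ (Finset.notMem_erase i A), pderiv_dvp_same, h1]
  rw [mul_zero, add_zero]
  congr 1
  apply Finset.prod_congr rfl
  intro j hj
  rw [h2 j (Finset.ne_of_mem_erase hj)]

/-- Exponents after `n` steps. -/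
def expo (α β k e : ℕ → ℕ) (n : ℕ) : ℕ ⊕ ℕ → ℤ
  | Sum.inl i => (k i : ℤ) - (if i < n then 1 - (α (i + 1) : ℤ) else 0)
      - (if 1 ≤ i ∧ i ≤ n then 1 - (β i : ℤ) else 0)
  | Sum.inr j => (e j : ℤ) - (if j < n then (α (j + 1) : ℤ) * β (j + 1) else 0)

theorem fold_step (s : ℕ) (α β : ℕ → ℕ) (hW : IsW s α β) (k e : ℕ → ℕ) (n : ℕ)
    (hn : n ≤ s - 1) :
    (List.range n).foldl
    (fun g j =>
      if α (j + 1) = 1 ∧ β (j + 1) = 1 then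
        (Polynomial.X : Polynomial ℚ) • MvPolynomial.pderiv (Sum.inr j) g
      else if α (j + 1) = 1 then MvPolynomial.pderiv (Sum.inl (j + 1)) g
      else MvPolynomial.pderiv (Sum.inl j) g)
      (∏ i ∈ (Finset.range s).disjSum (Finset.range (s - 1)), dvp i (expo α β k e 0 i)) =
    (Polynomial.X : Polynomial ℚ) ^ (∑ j ∈ Finset.range n, α (j + 1) * β (j + 1)) •
      ∏ i ∈ (Finset.range s).disjSum (Finset.range (s - 1)), dvp i (expo α β k e n i) := by
  induction n with
  | zero => simp
  | succ n ih =>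
    rw [List.range_succ, List.foldl_append, ih (by omega), Finset.sum_range_succ]
    simp only [List.foldl_cons, List.foldl_nil]
    rcases hW.1 (n + 1) (by omega) (by omega) with h | h | h <;>
      obtain ⟨ha, hb⟩ := Prod.mk.inj h
    · rw [if_neg (by omega), if_pos ha, (MvPolynomial.pderiv _).map_smul,
        pderiv_prod_mem _ _ _ _ (expo α β k e (n + 1))]
      · simp [ha, hb]
      · simp [expo, hb]
      · rintro (j | j) hj
        · have hj' : j ≠ n + 1 := fun h => hj (by rw [h])
          by_cases hjn : j = n
          · subst hjn; simp [expo, ha]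
          · have e1 : j < n + 1 ↔ j < n := by omega
            have e2 : j ≤ n + 1 ↔ j ≤ n := by omega
            simp [expo, e1, e2]
        · by_cases hjn : j = n
          · subst hjn; simp [expo, hb]
          · have e1 : j < n + 1 ↔ j < n := by omega
            simp [expo, e1]
      · simp; omega
    · rw [if_neg (by omega), if_neg (by omega), (MvPolynomial.pderiv _).map_smul,
        pderiv_prod_mem _ _ _ _ (expo α β k e (n + 1))]
      · simp [ha, hb]
      · simp [expo, ha]; ring
      · rintro (j | j) hj
        · have hj' : j ≠ n := fun h => hj (by rw [h])
          by_cases hjn : j = n + 1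
          · subst hjn; simp [expo, hb]
          · have e1 : j < n + 1 ↔ j < n := by omega
            have e2 : j ≤ n + 1 ↔ j ≤ n := by omega
            simp [expo, e1, e2]
        · by_cases hjn : j = n
          · subst hjn; simp [expo, ha]
          · have e1 : j < n + 1 ↔ j < n := by omega
            simp [expo, e1]
      · simp; omega
    · rw [if_pos ⟨ha, hb⟩, (MvPolynomial.pderiv _).map_smul,
        pderiv_prod_mem _ _ _ _ (expo α β k e (n + 1))]
      · rw [ha, hb, smul_smul, mul_one, pow_succ']
      · simp [expo, ha, hb]
      · rintro (j | j) hj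
        · have e1 : (if j < n + 1 then 1 - (α (j + 1) : ℤ) else 0) =
              if j < n then 1 - (α (j + 1) : ℤ) else 0 := by
            by_cases hjn : j = n
            · subst hjn; simp [ha]
            · have e1 : j < n + 1 ↔ j < n := by omega
              simp [e1]
          have e2 : (if 1 ≤ j ∧ j ≤ n + 1 then 1 - (β j : ℤ) else 0) =
              if 1 ≤ j ∧ j ≤ n then 1 - (β j : ℤ) else 0 := by
            by_cases hjn : j = n + 1
            · subst hjn; simp [hb]
            · have e1 : j ≤ n + 1 ↔ j ≤ n := by omega
              simp [e1]
          simp only [expo, e1, e2]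
        · have hj' : j ≠ n := fun h => hj (by rw [h])
          have e1 : j < n + 1 ↔ j < n := by omega
          simp [expo, e1]
      · simp; omega

theorem setYzero_dvp_inl (i : ℕ) (n : ℤ) :
    setYzero (dvp (Sum.inl i) n) = dvp (Sum.inl i) n := by
  unfold dvp
  split_ifs
  · simp
  · simp [setYzero, MvPolynomial.algebraMap_eq]

theorem setYzero_dvp_inr (i : ℕ) (n : ℤ) :
    setYzero (dvp (Sum.inr i) n) = if n = 0 then 1 else 0 := by
  unfold dvp
  rcases lt_trichotomy n 0 with h | h | h
  · simp [h, h.ne]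
  · subst h; simp
  · have h1 : ¬ n < 0 := by omega
    have h2 : n.toNat ≠ 0 := by omega
    simp [setYzero, h1, h.ne', h2]

theorem prod_dvp (f : ℕ → ℕ ⊕ ℕ) (m : ℕ → ℕ) (A : Finset ℕ) :
    ∏ i ∈ A, dvp (f i) (m i) =
      MvPolynomial.C (Polynomial.C ((∏ i ∈ A, ((m i).factorial : ℚ))⁻¹)) *
        ∏ i ∈ A, MvPolynomial.X (f i) ^ m i := by
  rw [← Finset.prod_inv_distrib, map_prod, map_prod, ← Finset.prod_mul_distrib]
  apply Finset.prod_congr rfl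
  intro i _
  simp [dvp]

end

open Classical in
/-- Lemma 3.6. For `k ∈ ℤ^s_{≥0}`, `e ∈ ℤ^{s-1}_{≥0}` and
`w ∈ W_{s-1}`, applying `D_w` to the monomial
`Π x_i^{k_i}/k_i! · Π y_j^{e_j}/e_j!` and then setting `y = 0` yields
`t^{|w|} Π x_i^{d_w(k)_i}/d_w(k)_i!` if `e = w̃` and `d_w(k) ∈ ℤ^s_{≥0}`,
and `0` otherwise. (0-indexed: `d_w(k)_{j+1} = k_{j+1} + α_{j+1} + β_j - 2`,
with the nonnegativity condition `k_{j+1} + α_{j+1} + β_j ≥ 2`.) -/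
theorem Dw_monomial (s : ℕ) (hs : 1 ≤ s) (α β : ℕ → ℕ) (hW : IsW s α β)
    (k e : ℕ → ℕ) :
    setYzero (DfoldW s α β
      (MvPolynomial.C (Polynomial.C
          ((∏ i ∈ Finset.range s, ((k i).factorial : ℚ))⁻¹ *
           (∏ j ∈ Finset.range (s - 1), ((e j).factorial : ℚ))⁻¹)) *
        (∏ i ∈ Finset.range s, MvPolynomial.X (Sum.inl i) ^ k i) *
        (∏ j ∈ Finset.range (s - 1), MvPolynomial.X (Sum.inr j) ^ e j))) =
    if (∀ j < s - 1, e j = α (j + 1) * β (j + 1)) ∧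
        (∀ j < s, 2 ≤ k j + α (j + 1) + β j) then
      MvPolynomial.C
          (Polynomial.X ^ (∑ j ∈ Finset.range (s - 1), α (j + 1) * β (j + 1)) *
           Polynomial.C
             ((∏ j ∈ Finset.range s, ((k j + α (j + 1) + β j - 2).factorial : ℚ))⁻¹)) *
        (∏ j ∈ Finset.range s, MvPolynomial.X (Sum.inl j) ^ (k j + α (j + 1) + β j - 2))
    else 0 := by
  have h0 : (MvPolynomial.C (Polynomial.C
          ((∏ i ∈ Finset.range s, ((k i).factorial : ℚ))⁻¹ *
           (∏ j ∈ Finset.range (s - 1), ((e j).factorial : ℚ))⁻¹)) *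
        (∏ i ∈ Finset.range s, MvPolynomial.X (Sum.inl i) ^ k i) *
        (∏ j ∈ Finset.range (s - 1), MvPolynomial.X (Sum.inr j) ^ e j) :
        MvPolynomial (ℕ ⊕ ℕ) (Polynomial ℚ)) =
      ∏ i ∈ (Finset.range s).disjSum (Finset.range (s - 1)), dvp i (expo α β k e 0 i) := by
    rw [Finset.prod_disjSum]
    have h1 : ∀ i, expo α β k e 0 (Sum.inl i) = k i := by
      intro i
      have : ¬ (1 ≤ i ∧ i ≤ 0) := by omega
      simp only [expo, if_neg this]; simp
    have h2 : ∀ i, expo α β k e 0 (Sum.inr i) = e i := by intro i; simp [expo]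
    simp only [h1, h2]
    rw [prod_dvp, prod_dvp, Polynomial.C_mul, MvPolynomial.C_mul]
    ring
  rw [h0]
  unfold DfoldW
  rw [fold_step s α β hW k e (s - 1) le_rfl, map_smul, map_prod, Finset.prod_disjSum]
  simp only [setYzero_dvp_inl, setYzero_dvp_inr]
  have hx : ∀ i < s, expo α β k e (s - 1) (Sum.inl i) = (k i : ℤ) + α (i + 1) + β i - 2 := by
    intro i hi
    obtain ⟨_, _, hb0, has, _⟩ := hW
    have e1 : (if i < s - 1 then 1 - (α (i + 1) : ℤ) else 0) = 1 - (α (i + 1) : ℤ) := by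
      split_ifs with h
      · rfl
      · have : i + 1 = s := by omega
        rw [this, has]; simp
    have e2 : (if 1 ≤ i ∧ i ≤ s - 1 then 1 - (β i : ℤ) else 0) = 1 - (β i : ℤ) := by
      split_ifs with h
      · rfl
      · have : i = 0 := by omega
        rw [this, hb0]; simp
    simp only [expo, e1, e2]; ring
  have hy : ∀ j < s - 1, (expo α β k e (s - 1) (Sum.inr j) = 0 ↔
      e j = α (j + 1) * β (j + 1)) := by
    intro j hj
    simp only [expo, if_pos hj]
    rw [sub_eq_zero]
    norm_cast
  split_ifs with hc
  · obtain ⟨hc1, hc2⟩ := hc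
    have p2 : (∏ j ∈ Finset.range (s - 1), (if expo α β k e (s - 1) (Sum.inr j) = 0 then
        (1 : MvPolynomial (ℕ ⊕ ℕ) (Polynomial ℚ)) else 0)) = 1 := by
      apply Finset.prod_eq_one
      intro j hj
      have hj := Finset.mem_range.mp hj
      rw [if_pos ((hy j hj).2 (hc1 j hj))]
    have p1 : (∏ i ∈ Finset.range s, dvp (Sum.inl i) (expo α β k e (s - 1) (Sum.inl i))) =
        ∏ i ∈ Finset.range s, dvp (Sum.inl i) ((k i + α (i + 1) + β i - 2 : ℕ) : ℤ) := by
      apply Finset.prod_congr rfl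
      intro i hi
      have hi := Finset.mem_range.mp hi
      have := hc2 i hi
      rw [hx i hi]
      congr 1
      omega
    rw [p2, p1, mul_one, prod_dvp Sum.inl (fun i => k i + α (i + 1) + β i - 2),
      MvPolynomial.smul_eq_C_mul, ← mul_assoc, ← MvPolynomial.C_mul]
  · by_cases hc1 : ∀ j < s - 1, e j = α (j + 1) * β (j + 1)
    · have hc2 : ¬ ∀ j < s, 2 ≤ k j + α (j + 1) + β j := fun h => hc ⟨hc1, h⟩
      push Not at hc2
      obtain ⟨j, hj, hlt⟩ := hc2
      rw [Finset.prod_eq_zero (Finset.mem_range.mpr hj), zero_mul, smul_zero]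
      rw [hx j hj]
      unfold dvp
      rw [if_pos (by omega)]
    · push Not at hc1
      obtain ⟨j, hj, hne⟩ := hc1
      rw [Finset.prod_eq_zero (i := j) (s := Finset.range (s - 1)) (Finset.mem_range.mpr hj),
        mul_zero, smul_zero]
      rw [if_neg (fun h => hne ((hy j hj).1 h))]
end

section
/- Let s ≥ 1 and k ∈ ℤ^s_{≥1}. Then the f-polynomial of the ladder diagram Γ_k satisfies the recursion F_k(t) = Σ_{w ∈ W_{s−1}} t^{|w|} · F_{r_w(k)*w̃}(t). (By extracting coefficients, this recursion is the coefficient-wise form of the partial differential equation (D_s Ψ_{2s−1}(x*y;t))|_{y=0} = 0 satisfied by the exponential generating function Ψ of the f-polynomials, where D_s = ∂^s/∂x_1⋯∂x_s − Π_{i=1}^{s−1}(∂/∂x_i + ∂/∂x_{i+1} + t·∂/∂y_i).) -/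
open Classical

/-- Level of a grid point. -/
def lvl (v : ℕ × ℕ) : ℕ := v.1 + v.2

/-- Local characterization of faces: `T` is the set of terminals on level `n`. -/
structure LF (n : ℕ) (T : Set (ℕ × ℕ)) (γ : LGraph) : Prop where
  step : ∀ e ∈ γ.E, gridStep e.1 e.2
  src : ∀ e ∈ γ.E, e.1 ∈ γ.V
  tgt : ∀ e ∈ γ.E, e.2 ∈ γ.V
  inc : ∀ v ∈ γ.V, v = (0, 0) ∨ ∃ e ∈ γ.E, e.2 = v
  out : ∀ v ∈ γ.V, v ∈ T ∨ ∃ e ∈ γ.E, e.1 = v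
  term : T ⊆ γ.V
  bound : ∀ v ∈ γ.V, lvl v ≤ n
  tl : ∀ t ∈ T, lvl t = n

theorem lvl_step {v w : ℕ × ℕ} (h : gridStep v w) : lvl w = lvl v + 1 := by
  rcases h with rfl | rfl <;> simp [lvl] <;> omega

theorem LF.top {n T γ} (h : LF n T γ) {v} (hv : v ∈ γ.V) (hn : lvl v = n) : v ∈ T := by
  rcases h.out v hv with h1 | ⟨e, he, rfl⟩
  · exact h1
  · have := h.bound _ (h.tgt e he)
    rw [lvl_step (h.step e he)] at this
    omega

theorem LF.back {n T γ} (h : LF n T γ) : ∀ m v, v ∈ γ.V → lvl v = m →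
    ∃ f : ℕ → ℕ × ℕ, f 0 = (0, 0) ∧ f m = v ∧ ∀ i < m, (f i, f (i + 1)) ∈ γ.E := by
  intro m
  induction m with
  | zero =>
    intro v hv h0
    refine ⟨fun _ => (0, 0), rfl, ?_, by simp⟩
    simp only [lvl] at h0
    ext <;> simp <;> omega
  | succ m ih =>
    intro v hv hm
    rcases h.inc v hv with rfl | ⟨e, he, rfl⟩
    · simp [lvl] at hm
    · obtain ⟨f, f0, fm, fE⟩ := ih e.1 (h.src e he) (by have := lvl_step (h.step e he); omega)
      refine ⟨fun i => if i ≤ m then f i else e.2, by simp [f0], by simp, ?_⟩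
      intro i hi
      by_cases him : i = m
      · subst him
        simpa [fm] using he
      · have h1 : i ≤ m := by omega
        have h2 : i + 1 ≤ m := by omega
        simp only [h1, h2, if_true]
        exact fE i (by omega)

theorem LF.fwd {n T γ} (h : LF n T γ) : ∀ j m (f : ℕ → ℕ × ℕ), m + j = n → f 0 = (0, 0) →
    lvl (f m) = m → f m ∈ γ.V → (∀ i < m, (f i, f (i + 1)) ∈ γ.E) →
    ∃ g : ℕ → ℕ × ℕ, (∀ i ≤ m, g i = f i) ∧ g n ∈ T ∧ ∀ i < n, (g i, g (i + 1)) ∈ γ.E := by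
  intro j
  induction j with
  | zero =>
    intro m f hm f0 fl fV fE
    obtain rfl : m = n := by omega
    exact ⟨f, fun _ _ => rfl, h.top fV fl, fE⟩
  | succ j ih =>
    intro m f hm f0 fl fV fE
    rcases h.out _ fV with hT | ⟨e, he, hef⟩
    · have := h.tl _ hT
      omega
    · obtain ⟨g, g1, g2, g3⟩ := ih (m + 1) (fun i => if i ≤ m then f i else e.2) (by omega)
        (by simp [f0]) (by simp [lvl_step (h.step e he), hef, fl])
        (by simpa using h.tgt e he)
        (by
          intro i hi
          by_cases him : i = m
          · subst him
            simpa [← hef] using he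
          · have h1 : i ≤ m := by omega
            have h2 : i + 1 ≤ m := by omega
            simp only [h1, h2, if_true]
            exact fE i (by omega))
      refine ⟨g, ?_, g2, g3⟩
      intro i hi
      rw [g1 i (by omega)]
      simp [hi]

theorem nseq_mono (k : ℕ → ℕ) {i j : ℕ} (h : i ≤ j) : nseq k i ≤ nseq k j := by
  unfold nseq
  exact Finset.sum_le_sum_of_subset (Finset.range_subset_range.2 h)

theorem terminals_lvl {s k t} (h : t ∈ terminals s k) : lvl t = nseq k s := by
  obtain ⟨i, hi, rfl⟩ := h
  have := nseq_mono k hi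
  simp only [lvl]
  omega

theorem path_lvl {m : ℕ} {f : ℕ → ℕ × ℕ} (f0 : f 0 = (0, 0))
    (hf : ∀ i < m, gridStep (f i) (f (i + 1))) : ∀ i ≤ m, lvl (f i) = i := by
  intro i
  induction i with
  | zero => intro _; simp [f0, lvl]
  | succ i ih =>
    intro hi
    rw [lvl_step (hf i (by omega)), ih (by omega)]

theorem path_le {m : ℕ} {f : ℕ → ℕ × ℕ}
    (hf : ∀ i < m, gridStep (f i) (f (i + 1))) : ∀ j i, i + j = m →
    (f i).1 ≤ (f m).1 ∧ (f i).2 ≤ (f m).2 := by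
  intro j
  induction j with
  | zero => intro i hi; obtain rfl : i = m := by omega
            exact ⟨le_rfl, le_rfl⟩
  | succ j ih =>
    intro i hi
    have h1 := ih (i + 1) (by omega)
    rcases hf i (by omega) with h2 | h2 <;> rw [h2] at h1 <;> simp at h1 <;> omega

theorem face_iff (s : ℕ) (k : ℕ → ℕ) (γ : LGraph) :
    IsLadderFace s k γ ↔ LF (nseq k s) (terminals s k) γ := by
  constructor
  · rintro ⟨hT, P, hP, hV, hE⟩
    have key : ∀ p ∈ P, p.V ⊆ γ.V ∧ p.E ⊆ γ.E := by
      intro p hp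
      rw [hV, hE]
      exact ⟨Set.subset_biUnion_of_mem (u := LGraph.V) hp,
        Set.subset_biUnion_of_mem (u := LGraph.E) hp⟩
    have exE : ∀ e ∈ γ.E, ∃ p ∈ P, e ∈ p.E := by
      intro e he
      rw [hE] at he
      simpa using he
    have exV : ∀ e ∈ γ.V, ∃ p ∈ P, e ∈ p.V := by
      intro e he
      rw [hV] at he
      simpa using he
    refine ⟨?_, ?_, ?_, ?_, ?_, hT, ?_, fun t ht => terminals_lvl ht⟩
    · intro e he
      obtain ⟨p, hp, hep⟩ := exE e he
      obtain ⟨m, f, f0, fm, fs, fl, pV, pE⟩ := hP p hp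
      rw [pE] at hep
      obtain ⟨i, hi, rfl⟩ := hep
      exact fs i hi
    · intro e he
      obtain ⟨p, hp, hep⟩ := exE e he
      obtain ⟨m, f, f0, fm, fs, fl, pV, pE⟩ := hP p hp
      rw [pE] at hep
      obtain ⟨i, hi, rfl⟩ := hep
      apply (key p hp).1
      rw [pV]
      exact ⟨i, by omega, rfl⟩
    · intro e he
      obtain ⟨p, hp, hep⟩ := exE e he
      obtain ⟨m, f, f0, fm, fs, fl, pV, pE⟩ := hP p hp
      rw [pE] at hep
      obtain ⟨i, hi, rfl⟩ := hep
      apply (key p hp).1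
      rw [pV]
      exact ⟨i + 1, by omega, rfl⟩
    · intro v hv
      obtain ⟨p, hp, hvp⟩ := exV v hv
      obtain ⟨m, f, f0, fm, fs, fl, pV, pE⟩ := hP p hp
      rw [pV] at hvp
      obtain ⟨i, hi, rfl⟩ := hvp
      rcases i with _ | i
      · left; exact f0
      · right
        refine ⟨(f i, f (i + 1)), (key p hp).2 ?_, rfl⟩
        rw [pE]
        exact ⟨i, by omega, rfl⟩
    · intro v hv
      obtain ⟨p, hp, hvp⟩ := exV v hv
      obtain ⟨m, f, f0, fm, fs, fl, pV, pE⟩ := hP p hp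
      rw [pV] at hvp
      obtain ⟨i, hi, rfl⟩ := hvp
      rcases hi.eq_or_lt with rfl | hi
      · left; exact fm
      · right
        refine ⟨(f i, f (i + 1)), (key p hp).2 ?_, rfl⟩
        rw [pE]
        exact ⟨i, by omega, rfl⟩
    · intro v hv
      obtain ⟨p, hp, hvp⟩ := exV v hv
      obtain ⟨m, f, f0, fm, fs, fl, pV, pE⟩ := hP p hp
      rw [pV] at hvp
      obtain ⟨i, hi, rfl⟩ := hvp
      have h1 := path_lvl f0 fs i hi
      have h2 := path_lvl f0 fs m le_rfl
      have h3 := terminals_lvl fm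
      omega
  · intro h
    set n := nseq k s with hn
    have mk : ∀ g : ℕ → ℕ × ℕ, g 0 = (0, 0) → g n ∈ terminals s k →
        (∀ i < n, (g i, g (i + 1)) ∈ γ.E) →
        ∃ p, (IsPositivePath s k p ∧ p.V ⊆ γ.V ∧ p.E ⊆ γ.E) ∧
          p.V = {v | ∃ i ≤ n, v = g i} ∧ p.E = {e | ∃ i < n, e = (g i, g (i + 1))} := by
      intro g g0 gn gE
      have gs : ∀ i < n, gridStep (g i) (g (i + 1)) := fun i hi => h.step _ (gE i hi)
      refine ⟨⟨{v | ∃ i ≤ n, v = g i}, {e | ∃ i < n, e = (g i, g (i + 1))}⟩,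
        ⟨⟨n, g, g0, gn, gs, ?_, rfl, rfl⟩, ?_, ?_⟩, rfl, rfl⟩
      · intro i hi
        exact ⟨g n, gn, path_le gs (n - i) i (by omega)⟩
      · rintro v ⟨i, hi, rfl⟩
        rcases hi.eq_or_lt with rfl | hi
        · exact h.term gn
        · exact h.src _ (gE i hi)
      · rintro e ⟨i, hi, rfl⟩
        exact gE i hi
    have mk2 : ∀ m (f : ℕ → ℕ × ℕ), f 0 = (0, 0) → lvl (f m) = m → f m ∈ γ.V →
        (∀ i < m, (f i, f (i + 1)) ∈ γ.E) →
        ∃ p, (IsPositivePath s k p ∧ p.V ⊆ γ.V ∧ p.E ⊆ γ.E) ∧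
          (∀ i ≤ m, f i ∈ p.V) ∧ (∀ i < m, (f i, f (i + 1)) ∈ p.E) := by
      intro m f f0 fl fV fE
      have hm : m ≤ n := by have := h.bound _ fV; omega
      obtain ⟨g, g1, g2, g3⟩ := h.fwd (n - m) m f (by omega) f0 fl fV fE
      obtain ⟨p, hp, pV, pE⟩ := mk g (by rw [g1 0 (by omega), f0]) g2 g3
      refine ⟨p, hp, ?_, ?_⟩
      · intro i hi
        rw [pV]
        exact ⟨i, by omega, (g1 i hi).symm⟩
      · intro i hi
        rw [pE]
        exact ⟨i, by omega, by rw [g1 i (by omega), g1 (i + 1) (by omega)]⟩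
    refine ⟨h.term, {p | IsPositivePath s k p ∧ p.V ⊆ γ.V ∧ p.E ⊆ γ.E}, fun p hp => hp.1, ?_, ?_⟩
    · apply Set.Subset.antisymm
      · intro v hv
        obtain ⟨f, f0, fm, fE⟩ := h.back _ v hv rfl
        obtain ⟨p, hp, h1, h2⟩ := mk2 (lvl v) f f0 (by rw [fm]) (by rw [fm]; exact hv) fE
        have := h1 _ le_rfl
        rw [fm] at this
        exact Set.mem_biUnion (t := LGraph.V) hp this
      · exact Set.iUnion₂_subset fun p hp => hp.2.1
    · apply Set.Subset.antisymm
      · intro e he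
        obtain ⟨f, f0, fm, fE⟩ := h.back _ _ (h.src e he) rfl
        set m := lvl e.1 with hm
        obtain ⟨p, hp, h1, h2⟩ := mk2 (m + 1) (fun i => if i ≤ m then f i else e.2)
          (by simp [f0]) (by simp [lvl_step (h.step e he), hm]) (by simpa using h.tgt e he)
          (by
            intro i hi
            by_cases him : i = m
            · rw [him]
              simpa [fm] using he
            · have h1 : i ≤ m := by omega
              have h2 : i + 1 ≤ m := by omega
              simp only [h1, h2, if_true]
              exact fE i (by omega))
        have := h2 m (by omega)
        simp [fm] at this
        exact Set.mem_biUnion (t := LGraph.E) hp this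
      · exact Set.iUnion₂_subset fun p hp => hp.2.2

/-- Remove the top level. -/
def cutG (n : ℕ) (γ : LGraph) : LGraph :=
  ⟨{v | v ∈ γ.V ∧ lvl v < n}, {e | e ∈ γ.E ∧ lvl e.2 < n}⟩

/-- Add a top level. -/
def glueG (T : Set (ℕ × ℕ)) (G : Set ((ℕ × ℕ) × (ℕ × ℕ))) (γ : LGraph) : LGraph :=
  ⟨γ.V ∪ T, γ.E ∪ G⟩

theorem LF.finV {n T γ} (h : LF n T γ) : γ.V.Finite := by
  apply ((Set.finite_Iic n).prod (Set.finite_Iic n)).subset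
  intro v hv
  have := h.bound v hv
  simp only [lvl] at this
  simp only [Set.mem_prod, Set.mem_Iic]
  omega

theorem LF.finE {n T γ} (h : LF n T γ) : γ.E.Finite := by
  apply (h.finV.prod h.finV).subset
  intro e he
  exact ⟨h.src e he, h.tgt e he⟩

theorem LF.finite (n T) : {γ | LF n T γ}.Finite := by
  have hB : (Set.Iic n ×ˢ Set.Iic n : Set (ℕ × ℕ)).Finite :=
    (Set.finite_Iic n).prod (Set.finite_Iic n)
  have := (hB.finite_subsets.prod (hB.prod hB).finite_subsets)
  refine Set.Finite.of_finite_image (f := fun γ : LGraph => (γ.V, γ.E)) (this.subset ?_) ?_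
  · rintro _ ⟨γ, hγ, rfl⟩
    have hV : γ.V ⊆ Set.Iic n ×ˢ Set.Iic n := by
      intro v hv
      have := hγ.bound v hv
      simp only [lvl] at this
      simp only [Set.mem_prod, Set.mem_Iic]
      omega
    exact ⟨hV, fun e he => ⟨hV (hγ.src e he), hV (hγ.tgt e he)⟩⟩
  · intro a _ b _ hab
    simp only [Prod.mk.injEq] at hab
    exact LGraph.ext hab.1 hab.2

theorem LF.dim_nonneg {n T γ} (h : LF n T γ) : 0 ≤ ldim γ := by
  have h1 : γ.V ⊆ insert (0, 0) (Prod.snd '' γ.E) := by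
    intro v hv
    rcases h.inc v hv with rfl | ⟨e, he, rfl⟩
    · simp
    · right; exact ⟨e, he, rfl⟩
  have h2 := Set.ncard_le_ncard h1 ((h.finE.image _).insert _)
  have h3 := Set.ncard_insert_le ((0, 0) : ℕ × ℕ) (Prod.snd '' γ.E)
  have h4 := Set.ncard_image_le (f := Prod.snd) h.finE
  unfold ldim
  omega

section cutglue
variable {n : ℕ} {T T' : Set (ℕ × ℕ)} {G : Set ((ℕ × ℕ) × (ℕ × ℕ))}

theorem cut_mem (hT' : T' = Prod.fst '' G) {γ} (h : LF (n + 1) T γ)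
    (hG : {e | e ∈ γ.E ∧ lvl e.2 = n + 1} = G) : LF n T' (cutG (n + 1) γ) := by
  subst hG hT'
  have hl : ∀ e ∈ γ.E, lvl e.2 = lvl e.1 + 1 := fun e he => lvl_step (h.step e he)
  refine ⟨fun e he => h.step e he.1, fun e he => ⟨h.src e he.1, ?_⟩,
    fun e he => ⟨h.tgt e he.1, he.2⟩, ?_, ?_, ?_, ?_, ?_⟩
  · have := hl e he.1
    have := he.2
    omega
  · rintro v ⟨hv, hlv⟩
    rcases h.inc v hv with rfl | ⟨e, he, rfl⟩
    · simp
    · right; exact ⟨e, ⟨he, hlv⟩, rfl⟩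
  · rintro v ⟨hv, hlv⟩
    rcases h.out v hv with hv' | ⟨e, he, rfl⟩
    · have := h.tl v hv'
      omega
    · by_cases h1 : lvl e.2 < n + 1
      · right; exact ⟨e, ⟨he, h1⟩, rfl⟩
      · left
        refine ⟨e, ⟨he, ?_⟩, rfl⟩
        have := hl e he
        omega
  · rintro _ ⟨e, ⟨he, hle⟩, rfl⟩
    refine ⟨h.src e he, ?_⟩
    have := hl e he
    omega
  · rintro v ⟨hv, hlv⟩
    omega
  · rintro _ ⟨e, ⟨he, hle⟩, rfl⟩
    have := hl e he
    omega

theorem glue_mem (hT' : T' = Prod.fst '' G) (hT : ∀ t ∈ T, lvl t = n + 1)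
    (hGs : ∀ e ∈ G, gridStep e.1 e.2) (hGT : T = Prod.snd '' G) {γ} (h : LF n T' γ) :
    LF (n + 1) T (glueG T G γ) ∧
      {e | e ∈ (glueG T G γ).E ∧ lvl e.2 = n + 1} = G := by
  have hGT' : ∀ e ∈ G, e.2 ∈ T := fun e he => by rw [hGT]; exact ⟨e, he, rfl⟩
  have hGT'' : ∀ e ∈ G, e.1 ∈ T' := fun e he => by rw [hT']; exact ⟨e, he, rfl⟩
  constructor
  · refine ⟨?_, ?_, ?_, ?_, ?_, Set.subset_union_right, ?_, hT⟩
    · rintro e (he | he)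
      exacts [h.step e he, hGs e he]
    · rintro e (he | he)
      exacts [Or.inl (h.src e he), Or.inl (h.term (hGT'' e he))]
    · rintro e (he | he)
      exacts [Or.inl (h.tgt e he), Or.inr (hGT' e he)]
    · rintro v (hv | hv)
      · rcases h.inc v hv with rfl | ⟨e, he, rfl⟩
        · simp
        · right; exact ⟨e, Or.inl he, rfl⟩
      · rw [hGT] at hv
        obtain ⟨e, he, rfl⟩ := hv
        right; exact ⟨e, Or.inr he, rfl⟩
    · rintro v (hv | hv)
      · rcases h.out v hv with hv' | ⟨e, he, rfl⟩
        · rw [hT'] at hv'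
          obtain ⟨e, he, rfl⟩ := hv'
          right; exact ⟨e, Or.inr he, rfl⟩
        · right; exact ⟨e, Or.inl he, rfl⟩
      · left; exact hv
    · rintro v (hv | hv)
      · have := h.bound v hv
        omega
      · rw [hT v hv]
  · ext e
    constructor
    · rintro ⟨he | he, hl⟩
      · have := h.bound _ (h.tgt e he)
        omega
      · exact he
    · intro he
      exact ⟨Or.inr he, hT _ (hGT' e he)⟩

theorem glue_cut {γ} (h : LF (n + 1) T γ)
    (hG : {e | e ∈ γ.E ∧ lvl e.2 = n + 1} = G) : glueG T G (cutG (n + 1) γ) = γ := by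
  subst hG
  apply LGraph.ext
  · ext v
    constructor
    · rintro (hv | hv)
      exacts [hv.1, h.term hv]
    · intro hv
      rcases (h.bound v hv).eq_or_lt with h1 | h1
      · exact Or.inr (h.top hv h1)
      · exact Or.inl ⟨hv, h1⟩
  · ext e
    constructor
    · rintro (hv | hv)
      exacts [hv.1, hv.1]
    · intro he
      rcases (h.bound _ (h.tgt e he)).eq_or_lt with h1 | h1
      · exact Or.inr ⟨he, h1⟩
      · exact Or.inl ⟨he, h1⟩

theorem cut_glue (hT : ∀ t ∈ T, lvl t = n + 1) (hGT : T = Prod.snd '' G) {γ} (h : LF n T' γ) :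
    cutG (n + 1) (glueG T G γ) = γ := by
  have hGT' : ∀ e ∈ G, e.2 ∈ T := fun e he => by rw [hGT]; exact ⟨e, he, rfl⟩
  apply LGraph.ext
  · ext v
    constructor
    · rintro ⟨hv | hv, hl⟩
      · exact hv
      · have := hT v hv
        omega
    · intro hv
      exact ⟨Or.inl hv, by have := h.bound v hv; omega⟩
  · ext e
    constructor
    · rintro ⟨hv | hv, hl⟩
      · exact hv
      · have := hT _ (hGT' e hv)
        omega
    · intro hv
      exact ⟨Or.inl hv, by have := h.bound _ (h.tgt e hv); omega⟩

theorem glue_dim (hT : ∀ t ∈ T, lvl t = n + 1) (hGT : T = Prod.snd '' G) (hGf : G.Finite)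
    {γ} (h : LF n T' γ) :
    ldim (glueG T G γ) = ldim γ + G.ncard - T.ncard := by
  have hGT' : ∀ e ∈ G, e.2 ∈ T := fun e he => by rw [hGT]; exact ⟨e, he, rfl⟩
  have hTf : T.Finite := by rw [hGT]; exact hGf.image _
  have d1 : Disjoint γ.V T := by
    rw [Set.disjoint_left]
    intro v hv hv'
    have := h.bound v hv
    have := hT v hv'
    omega
  have d2 : Disjoint γ.E G := by
    rw [Set.disjoint_left]
    intro e hv hv'
    have := h.bound _ (h.tgt e hv)
    have := hT _ (hGT' e hv')
    omega
  have e1 := Set.ncard_union_eq d1 h.finV hTf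
  have e2 := Set.ncard_union_eq d2 h.finE hGf
  simp only [ldim, glueG, e1, e2]
  push_cast
  ring

theorem count (hT' : T' = Prod.fst '' G) (hT : ∀ t ∈ T, lvl t = n + 1)
    (hGs : ∀ e ∈ G, gridStep e.1 e.2) (hGT : T = Prod.snd '' G) (hGf : G.Finite) (w : ℕ)
    (hw : G.ncard = T.ncard + w) (d : ℤ) :
    {γ | (LF (n + 1) T γ ∧ ldim γ = d) ∧ {e | e ∈ γ.E ∧ lvl e.2 = n + 1} = G}.ncard =
      {γ | LF n T' γ ∧ ldim γ = d - w}.ncard := by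
  symm
  have hinv : Set.InvOn (cutG (n + 1)) (glueG T G) {γ | LF n T' γ ∧ ldim γ = d - w}
      {γ | (LF (n + 1) T γ ∧ ldim γ = d) ∧ {e | e ∈ γ.E ∧ lvl e.2 = n + 1} = G} :=
    ⟨fun γ h => cut_glue hT hGT h.1, fun γ h => glue_cut h.1.1 h.2⟩
  have hb := hinv.bijOn
    (by
      rintro γ ⟨h, hd⟩
      have := glue_mem hT' hT hGs hGT h
      refine ⟨⟨this.1, ?_⟩, this.2⟩
      rw [glue_dim hT hGT hGf h, hd, hw]
      push_cast
      ring)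
    (by
      rintro γ ⟨⟨h, hd⟩, hg⟩
      have hc := cut_mem hT' h hg
      refine ⟨hc, ?_⟩
      have := glue_dim hT hGT hGf hc
      rw [glue_cut h hg, hd, hw] at this
      push_cast at this
      linarith)
  rw [← hb.image_eq, hb.injOn.ncard_image]

end cutglue

theorem nseq_succ (k : ℕ → ℕ) (i : ℕ) : nseq k (i + 1) = nseq k i + k i :=
  Finset.sum_range_succ _ _

theorem nseq_zero (k : ℕ → ℕ) : nseq k 0 = 0 := rfl

theorem nseq_lt {s : ℕ} {k : ℕ → ℕ} (hk : ∀ i < s, 0 < k i) {i j : ℕ} (hij : i < j)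
    (hj : j ≤ s) : nseq k i < nseq k j := by
  have h1 := nseq_succ k i
  have h2 := hk i (by omega)
  have h3 := nseq_mono k (show i + 1 ≤ j by omega)
  omega

theorem nseq_inj {s : ℕ} {k : ℕ → ℕ} (hk : ∀ i < s, 0 < k i) {i j : ℕ} (hi : i ≤ s)
    (hj : j ≤ s) (h : nseq k i = nseq k j) : i = j := by
  rcases lt_trichotomy i j with h1 | h1 | h1
  · have := nseq_lt hk h1 hj
    omega
  · exact h1
  · have := nseq_lt hk h1 hi
    omega

/-- Terminal vertex. -/
def tv (s : ℕ) (k : ℕ → ℕ) (i : ℕ) : ℕ × ℕ := (nseq k i, nseq k s - nseq k i)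

/-- Horizontal edge into the `i`-th terminal vertex. -/
def hE (s : ℕ) (k : ℕ → ℕ) (i : ℕ) : (ℕ × ℕ) × (ℕ × ℕ) :=
  ((nseq k i - 1, nseq k s - nseq k i), (nseq k i, nseq k s - nseq k i))

/-- Vertical edge into the `i`-th terminal vertex. -/
def vE (s : ℕ) (k : ℕ → ℕ) (i : ℕ) : (ℕ × ℕ) × (ℕ × ℕ) :=
  ((nseq k i, nseq k s - nseq k i - 1), (nseq k i, nseq k s - nseq k i))

theorem alph_zero (s c) : alph s c 0 = 0 := by simp [alph]
theorem bet_zero (s c) : bet s c 0 = 1 := by simp [bet]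
theorem alph_last {s} (hs : 1 ≤ s) (c) : alph s c s = 1 := by
  unfold alph
  rw [if_neg (by omega), dif_neg (by omega)]
theorem bet_last {s} (hs : 1 ≤ s) (c) : bet s c s = 0 := by
  unfold bet
  rw [if_neg (by omega), dif_neg (by omega)]

theorem ab_cases (s c i) : (alph s c i = 1 ∧ bet s c i = 0) ∨ (alph s c i = 0 ∧ bet s c i = 1) ∨
    (alph s c i = 1 ∧ bet s c i = 1) := by
  unfold alph bet
  split_ifs with h1 h2
  · simp
  · generalize c ⟨i - 1, h2⟩ = x
    fin_cases x <;> simp [aW3, bW3]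
  · simp

theorem newk_even (s c k j) :
    newk s c k (2 * j) = k j + 1 - alph s c (j + 1) - bet s c j := by
  unfold newk
  rw [if_pos (by omega), show 2 * j / 2 = j by omega]

theorem newk_odd (s c k j) :
    newk s c k (2 * j + 1) = alph s c (j + 1) * bet s c (j + 1) := by
  unfold newk
  rw [if_neg (by omega), show (2 * j + 1) / 2 = j by omega]

theorem nseq_newk_odd {s : ℕ} {k : ℕ → ℕ} (hk : ∀ i < s, 0 < k i) (c) : ∀ j, j < s →
    nseq (newk s c k) (2 * j + 1) + alph s c (j + 1) = nseq k (j + 1) := by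
  intro j
  induction j with
  | zero =>
    intro h
    have h1 := newk_even s c k 0
    have h2 := hk 0 h
    have h3 := ab_cases s c 1
    rw [bet_zero] at h1
    simp only [nseq_succ, nseq_zero, Nat.mul_zero, Nat.zero_add] at *
    omega
  | succ j ih =>
    intro h
    have h1 := newk_even s c k (j + 1)
    have h1' := newk_odd s c k j
    have h2 := hk (j + 1) h
    have h0 := ih (by omega)
    have e1 := nseq_succ (newk s c k) (2 * j + 1)
    have e2 := nseq_succ (newk s c k) (2 * j + 2)
    have e3 := nseq_succ k (j + 1)
    rw [show 2 * (j + 1) = 2 * j + 2 by ring] at *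
    rw [show 2 * j + 1 + 1 = 2 * j + 2 by ring] at *
    rcases ab_cases s c (j + 1) with ⟨ha, hb⟩ | ⟨ha, hb⟩ | ⟨ha, hb⟩ <;>
    rcases ab_cases s c (j + 1 + 1) with ⟨ha', hb'⟩ | ⟨ha', hb'⟩ | ⟨ha', hb'⟩ <;>
    simp only [ha, hb, ha'] at * <;> omega

theorem nseq_newk_even {s : ℕ} {k : ℕ → ℕ} (hk : ∀ i < s, 0 < k i) (c) : ∀ j, j < s →
    nseq (newk s c k) (2 * (j + 1)) + 1 = nseq k (j + 1) + bet s c (j + 1) := by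
  intro j hj
  have h0 := nseq_newk_odd hk c j hj
  have h1' := newk_odd s c k j
  have e1 := nseq_succ (newk s c k) (2 * j + 1)
  rw [show 2 * (j + 1) = 2 * j + 1 + 1 by ring]
  rcases ab_cases s c (j + 1) with ⟨ha, hb⟩ | ⟨ha, hb⟩ | ⟨ha, hb⟩ <;>
    simp only [ha, hb] at * <;> omega

theorem mem_gwE {s k α β e} : e ∈ gwE s k α β ↔
    ∃ i ≤ s, (α i = 1 ∧ e = hE s k i) ∨ (β i = 1 ∧ e = vE s k i) := Iff.rfl

set_option linter.unusedVariables false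

theorem n_pos {s : ℕ} (hs : 1 ≤ s) {k : ℕ → ℕ} (hk : ∀ i < s, 0 < k i)
    : 0 < nseq k s := by
  have := nseq_lt hk (show 0 < s by omega) le_rfl
  omega

theorem nseq_newk_last {s : ℕ} (hs : 1 ≤ s) {k : ℕ → ℕ} (hk : ∀ i < s, 0 < k i)
    (c) : nseq (newk s c k) (2 * s - 1) + 1 = nseq k s := by
  have h0 := nseq_newk_odd hk c (s - 1) (by omega)
  rw [show s - 1 + 1 = s by omega, alph_last hs, show 2 * (s - 1) + 1 = 2 * s - 1 by omega] at h0
  exact h0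

theorem a_pos {s : ℕ} (hs : 1 ≤ s) {k : ℕ → ℕ} (hk : ∀ i < s, 0 < k i)
    {c i} (hi : i ≤ s) (h : alph s c i = 1) : 0 < nseq k i := by
  have h0 : 0 < i := by
    rcases Nat.eq_zero_or_pos i with rfl | h1
    · rw [alph_zero] at h; omega
    · exact h1
  have := nseq_lt hk h0 hi
  omega

theorem b_pos {s : ℕ} (hs : 1 ≤ s) {k : ℕ → ℕ} (hk : ∀ i < s, 0 < k i)
    {c i} (hi : i ≤ s) (h : bet s c i = 1) : nseq k i < nseq k s := by
  have h0 : i < s := by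
    rcases hi.eq_or_lt with rfl | h1
    · rw [bet_last hs] at h; omega
    · exact h1
  exact nseq_lt hk h0 le_rfl

theorem gw_fst {s : ℕ} (hs : 1 ≤ s) {k : ℕ → ℕ} (hk : ∀ i < s, 0 < k i)
    (c) : terminals (2 * s - 1) (newk s c k) =
    Prod.fst '' gwE s k (alph s c) (bet s c) := by
  have hl := nseq_newk_last hs hk c
  ext u
  constructor
  · rintro ⟨t, ht, rfl⟩
    rcases Nat.even_or_odd' t with ⟨j, rfl | rfl⟩
    · rcases j with _ | j
      · refine ⟨vE s k 0, ⟨0, by omega, Or.inr ⟨bet_zero _ _, rfl⟩⟩, ?_⟩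
        simp only [vE, nseq_zero, Nat.mul_zero]
        ext <;> simp <;> omega
      · have h1 := nseq_newk_even hk c j (by omega)
        have h3 := nseq_mono k (show j + 1 ≤ s by omega)
        rcases ab_cases s c (j + 1) with h2 | h2
        · have := a_pos hs hk (show j + 1 ≤ s by omega) h2.1
          refine ⟨hE s k (j + 1), ⟨j + 1, by omega, Or.inl ⟨h2.1, rfl⟩⟩, ?_⟩
          simp only [hE]
          ext <;> simp <;> omega
        · have hb : bet s c (j + 1) = 1 := by omega
          have := b_pos hs hk (show j + 1 ≤ s by omega) hb
          refine ⟨vE s k (j + 1), ⟨j + 1, by omega, Or.inr ⟨hb, rfl⟩⟩, ?_⟩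
          simp only [vE]
          ext <;> simp <;> omega
    · have h1 := nseq_newk_odd hk c j (by omega)
      have h3 := nseq_mono k (show j + 1 ≤ s by omega)
      by_cases ha : alph s c (j + 1) = 1
      · have := a_pos hs hk (show j + 1 ≤ s by omega) ha
        refine ⟨hE s k (j + 1), ⟨j + 1, by omega, Or.inl ⟨ha, rfl⟩⟩, ?_⟩
        simp only [hE]
        ext <;> simp <;> omega
      · have h2 := ab_cases s c (j + 1)
        have hb : bet s c (j + 1) = 1 := by omega
        have := b_pos hs hk (show j + 1 ≤ s by omega) hb
        refine ⟨vE s k (j + 1), ⟨j + 1, by omega, Or.inr ⟨hb, rfl⟩⟩, ?_⟩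
        simp only [vE]
        ext <;> simp <;> omega
  · rintro ⟨e, he, rfl⟩
    obtain ⟨i, hi, ⟨ha, rfl⟩ | ⟨hb, rfl⟩⟩ := mem_gwE.1 he
    · have hp := a_pos hs hk hi ha
      have h3 := nseq_mono k hi
      rcases i with _ | j
      · rw [nseq_zero] at hp; omega
      have h1 := nseq_newk_odd hk c j (by omega)
      refine ⟨2 * j + 1, by omega, ?_⟩
      simp only [hE]
      ext <;> simp <;> omega
    · have hp := b_pos hs hk hi hb
      rcases i with _ | j
      · refine ⟨0, by omega, ?_⟩
        simp only [vE, nseq_zero]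
        ext <;> simp <;> omega
      have : j + 1 ≠ s := by rintro h; rw [h] at hp; omega
      have h1 := nseq_newk_even hk c j (by omega)
      refine ⟨2 * (j + 1), by omega, ?_⟩
      simp only [vE]
      ext <;> simp <;> omega

theorem gw_snd {s : ℕ} (hs : 1 ≤ s) {k : ℕ → ℕ} (hk : ∀ i < s, 0 < k i)
    (c) : terminals s k = Prod.snd '' gwE s k (alph s c) (bet s c) := by
  ext u
  constructor
  · rintro ⟨i, hi, rfl⟩
    by_cases ha : alph s c i = 1
    · exact ⟨hE s k i, ⟨i, hi, Or.inl ⟨ha, rfl⟩⟩, rfl⟩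
    · have := ab_cases s c i
      exact ⟨vE s k i, ⟨i, hi, Or.inr ⟨by omega, rfl⟩⟩, rfl⟩
  · rintro ⟨e, he, rfl⟩
    obtain ⟨i, hi, ⟨ha, rfl⟩ | ⟨hb, rfl⟩⟩ := mem_gwE.1 he
    · exact ⟨i, hi, rfl⟩
    · exact ⟨i, hi, rfl⟩

theorem gw_step {s : ℕ} (hs : 1 ≤ s) {k : ℕ → ℕ} (hk : ∀ i < s, 0 < k i)
    (c) : ∀ e ∈ gwE s k (alph s c) (bet s c), gridStep e.1 e.2 := by
  intro e he
  obtain ⟨i, hi, ⟨ha, rfl⟩ | ⟨hb, rfl⟩⟩ := mem_gwE.1 he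
  · have hp := a_pos hs hk hi ha
    left
    simp only [hE]
    ext <;> simp <;> omega
  · have hp := b_pos hs hk hi hb
    right
    simp only [vE]
    ext <;> simp <;> omega

theorem hE_inj {s : ℕ} (hs : 1 ≤ s) {k : ℕ → ℕ} (hk : ∀ i < s, 0 < k i)
    {i j : ℕ} (hi : i ≤ s) (hj : j ≤ s) (h : hE s k i = hE s k j) : i = j := by
  simp only [hE, Prod.mk.injEq] at h
  exact nseq_inj hk hi hj h.2.1

theorem vE_inj {s : ℕ} (hs : 1 ≤ s) {k : ℕ → ℕ} (hk : ∀ i < s, 0 < k i)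
    {i j : ℕ} (hi : i ≤ s) (hj : j ≤ s) (h : vE s k i = vE s k j) : i = j := by
  simp only [vE, Prod.mk.injEq] at h
  exact nseq_inj hk hi hj h.2.1

theorem hE_ne_vE {s : ℕ} (hs : 1 ≤ s) {k : ℕ → ℕ} (hk : ∀ i < s, 0 < k i)
    {i j : ℕ} (hi : i ≤ s) (hj : j ≤ s) : hE s k i ≠ vE s k j := by
  intro h
  simp only [hE, vE, Prod.mk.injEq] at h
  have := n_pos hs hk
  have := nseq_mono k hi
  have := nseq_mono k hj
  omega

theorem hE_mem {s : ℕ} (hs : 1 ≤ s) {k : ℕ → ℕ} (hk : ∀ i < s, 0 < k i)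
    {c i} (hi : i ≤ s) : hE s k i ∈ gwE s k (alph s c) (bet s c) ↔ alph s c i = 1 := by
  constructor
  · intro h
    obtain ⟨j, hj, ⟨ha, h⟩ | ⟨hb, h⟩⟩ := mem_gwE.1 h
    · rwa [hE_inj hs hk hi hj h]
    · exact (hE_ne_vE hs hk hi hj h).elim
  · intro h
    exact ⟨i, hi, Or.inl ⟨h, rfl⟩⟩

theorem vE_mem {s : ℕ} (hs : 1 ≤ s) {k : ℕ → ℕ} (hk : ∀ i < s, 0 < k i)
    {c i} (hi : i ≤ s) : vE s k i ∈ gwE s k (alph s c) (bet s c) ↔ bet s c i = 1 := by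
  constructor
  · intro h
    obtain ⟨j, hj, ⟨ha, h⟩ | ⟨hb, h⟩⟩ := mem_gwE.1 h
    · exact (hE_ne_vE hs hk hj hi h.symm).elim
    · rwa [vE_inj hs hk hi hj h]
  · intro h
    exact ⟨i, hi, Or.inr ⟨h, rfl⟩⟩

theorem gw_inj {s : ℕ} (hs : 1 ≤ s) {k : ℕ → ℕ} (hk : ∀ i < s, 0 < k i)
    {c c' : Fin (s - 1) → Fin 3}
    (h : gwE s k (alph s c) (bet s c) = gwE s k (alph s c') (bet s c')) : c = c' := by
  funext i
  have hi : (i : ℕ) + 1 ≤ s := by omega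
  have h1 := hE_mem hs hk (c := c) hi
  have h2 := vE_mem hs hk (c := c) hi
  rw [h, hE_mem hs hk hi] at h1
  rw [h, vE_mem hs hk hi] at h2
  simp only [alph, bet, Nat.succ_ne_zero, if_false, Nat.add_sub_cancel, i.2, dif_pos] at h1 h2
  revert h1 h2
  simp only [Fin.eta]
  generalize c i = x
  generalize c' i = y
  fin_cases x <;> fin_cases y <;> simp [aW3, bW3]

theorem gw_eq {s : ℕ} (hs : 1 ≤ s) {k : ℕ → ℕ} (hk : ∀ i < s, 0 < k i)
    (c) : gwE s k (alph s c) (bet s c) =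
    ((((Finset.range (s + 1)).filter (fun i => alph s c i = 1)).image (hE s k) ∪
      ((Finset.range (s + 1)).filter (fun i => bet s c i = 1)).image (vE s k) :
      Finset ((ℕ × ℕ) × (ℕ × ℕ))) : Set ((ℕ × ℕ) × (ℕ × ℕ))) := by
  ext e
  simp only [mem_gwE, Finset.coe_union, Set.mem_union, Finset.coe_image, Set.mem_image,
    Finset.mem_coe, Finset.mem_filter, Finset.mem_range, Nat.lt_succ_iff]
  constructor
  · rintro ⟨i, hi, ⟨ha, rfl⟩ | ⟨hb, rfl⟩⟩
    · exact Or.inl ⟨i, ⟨hi, ha⟩, rfl⟩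
    · exact Or.inr ⟨i, ⟨hi, hb⟩, rfl⟩
  · rintro (⟨i, ⟨hi, ha⟩, rfl⟩ | ⟨i, ⟨hi, hb⟩, rfl⟩)
    · exact ⟨i, hi, Or.inl ⟨ha, rfl⟩⟩
    · exact ⟨i, hi, Or.inr ⟨hb, rfl⟩⟩

theorem gw_fin {s : ℕ} (hs : 1 ≤ s) {k : ℕ → ℕ} (hk : ∀ i < s, 0 < k i)
    (c) : (gwE s k (alph s c) (bet s c)).Finite := by
  rw [gw_eq hs hk]
  exact Finset.finite_toSet _

theorem term_card {s : ℕ} (hs : 1 ≤ s) {k : ℕ → ℕ} (hk : ∀ i < s, 0 < k i)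
    : (terminals s k).ncard = s + 1 := by
  have : terminals s k = ((Finset.range (s + 1)).image (tv s k) : Finset (ℕ × ℕ)) := by
    ext v
    simp only [terminals, Set.mem_setOf_eq, Finset.coe_image, Set.mem_image, Finset.mem_coe,
      Finset.mem_range, Nat.lt_succ_iff]
    constructor
    · rintro ⟨i, hi, rfl⟩
      exact ⟨i, hi, rfl⟩
    · rintro ⟨i, hi, rfl⟩
      exact ⟨i, hi, rfl⟩
  rw [this, Set.ncard_coe_finset, Finset.card_image_of_injOn, Finset.card_range]
  intro i hi j hj h
  simp only [Finset.coe_range, Set.mem_Iio] at hi hj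
  simp only [tv, Prod.mk.injEq] at h
  exact nseq_inj hk (by omega) (by omega) h.1

theorem wsize_eq {s : ℕ} (hs : 1 ≤ s) {k : ℕ → ℕ} (hk : ∀ i < s, 0 < k i)
    (c) : wsize s c = ∑ i ∈ Finset.range (s + 1), alph s c i * bet s c i := by
  rw [Finset.sum_range_succ, bet_last hs]
  obtain ⟨r, rfl⟩ : ∃ r, s = r + 1 := ⟨s - 1, by omega⟩
  rw [Finset.sum_range_succ', alph_zero]
  simp [wsize]

theorem gw_card {s : ℕ} (hs : 1 ≤ s) {k : ℕ → ℕ} (hk : ∀ i < s, 0 < k i)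
    (c) : (gwE s k (alph s c) (bet s c)).ncard =
    (terminals s k).ncard + wsize s c := by
  rw [term_card hs hk, gw_eq hs hk, Set.ncard_coe_finset, Finset.card_union_of_disjoint,
    Finset.card_image_of_injOn, Finset.card_image_of_injOn, Finset.card_filter,
    Finset.card_filter, wsize_eq hs hk, ← Finset.sum_add_distrib]
  · have : s + 1 = ∑ i ∈ Finset.range (s + 1), 1 := by simp
    refine Eq.trans ?_ (congrArg (· + _) this.symm)
    rw [← Finset.sum_add_distrib]
    refine Finset.sum_congr rfl fun i _ => ?_
    rcases ab_cases s c i with ⟨ha, hb⟩ | ⟨ha, hb⟩ | ⟨ha, hb⟩ <;> simp [ha, hb]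
  · intro i hi j hj h
    simp at hi hj
    exact vE_inj hs hk (by omega) (by omega) h
  · intro i hi j hj h
    simp at hi hj
    exact hE_inj hs hk (by omega) (by omega) h
  · rw [Finset.disjoint_left]
    intro e he he'
    simp only [Finset.mem_image, Finset.mem_filter, Finset.mem_range] at he he'
    obtain ⟨i, hi, rfl⟩ := he
    obtain ⟨j, hj, h⟩ := he'
    exact hE_ne_vE hs hk (by omega) (by omega) h.symm

/-- The word of a face. -/
noncomputable def cOf (s : ℕ) (k : ℕ → ℕ) (γ : LGraph) : Fin (s - 1) → Fin 3 := fun i =>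
  if hE s k (i + 1) ∈ γ.E then (if vE s k (i + 1) ∈ γ.E then 2 else 0) else 1

theorem top_edge {s : ℕ} (hs : 1 ≤ s) {k : ℕ → ℕ} (hk : ∀ i < s, 0 < k i)
    {γ} (h : LF (nseq k s) (terminals s k) γ) {e} (he : e ∈ γ.E)
    {i : ℕ} (hv : e.2 = tv s k i) : e = hE s k i ∨ e = vE s k i := by
  have hst := h.step e he
  obtain ⟨⟨a, b⟩, v⟩ := e
  simp only [tv] at hv
  subst hv
  simp only [gridStep, Prod.mk.injEq] at hst
  rcases hst with ⟨h1, h2⟩ | ⟨h1, h2⟩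
  · left
    simp only [hE, Prod.mk.injEq, and_true]
    omega
  · right
    simp only [vE, Prod.mk.injEq, and_true]
    omega

theorem inc_edge {s : ℕ} (hs : 1 ≤ s) {k : ℕ → ℕ} (hk : ∀ i < s, 0 < k i)
    {γ} (h : LF (nseq k s) (terminals s k) γ) {i : ℕ} (hi : i ≤ s) :
    hE s k i ∈ γ.E ∨ vE s k i ∈ γ.E := by
  have hn := n_pos hs hk
  have hm := nseq_mono k hi
  rcases h.inc (tv s k i) (h.term ⟨i, hi, rfl⟩) with h0 | ⟨e, he, hv⟩
  · simp only [tv, Prod.mk.injEq] at h0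
    omega
  · rcases top_edge hs hk h he hv with rfl | rfl
    exacts [Or.inl he, Or.inr he]

theorem hE_zero {s : ℕ} (hs : 1 ≤ s) {k : ℕ → ℕ} (hk : ∀ i < s, 0 < k i)
    {γ} (h : LF (nseq k s) (terminals s k) γ) : hE s k 0 ∉ γ.E := by
  intro he
  have := lvl_step (h.step _ he)
  simp [lvl, hE, nseq_zero] at this

theorem vE_last {s : ℕ} (hs : 1 ≤ s) {k : ℕ → ℕ} (hk : ∀ i < s, 0 < k i)
    {γ} (h : LF (nseq k s) (terminals s k) γ) : vE s k s ∉ γ.E := by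
  intro he
  have := lvl_step (h.step _ he)
  simp [lvl, vE] at this

theorem cOf_spec {s : ℕ} (hs : 1 ≤ s) {k : ℕ → ℕ} (hk : ∀ i < s, 0 < k i)
    {γ} (h : LF (nseq k s) (terminals s k) γ) {i : ℕ} (hi : i ≤ s) :
    (alph s (cOf s k γ) i = 1 ↔ hE s k i ∈ γ.E) ∧ (bet s (cOf s k γ) i = 1 ↔ vE s k i ∈ γ.E) := by
  have hinc := inc_edge hs hk h hi
  rcases i with _ | i
  · have := hE_zero hs hk h
    rw [alph_zero, bet_zero]
    tauto
  rcases hi.eq_or_lt with h1 | h1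
  · rw [h1] at hinc ⊢
    have := vE_last hs hk h
    rw [alph_last hs, bet_last hs]
    tauto
  · have h2 : i < s - 1 := by omega
    simp only [alph, bet, Nat.succ_ne_zero, if_false, Nat.add_sub_cancel, h2, dif_pos, cOf]
    by_cases p : hE s k (i + 1) ∈ γ.E <;> by_cases q : vE s k (i + 1) ∈ γ.E <;>
      simp [p, q, aW3, bW3] at hinc ⊢

theorem top_eq {s : ℕ} (hs : 1 ≤ s) {k : ℕ → ℕ} (hk : ∀ i < s, 0 < k i)
    {γ} (h : LF (nseq k s) (terminals s k) γ) :
    {e | e ∈ γ.E ∧ lvl e.2 = nseq k s} =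
      gwE s k (alph s (cOf s k γ)) (bet s (cOf s k γ)) := by
  ext e
  rw [mem_gwE]
  constructor
  · rintro ⟨he, hl⟩
    obtain ⟨i, hi, hv⟩ := h.top (h.tgt e he) hl
    refine ⟨i, hi, ?_⟩
    rcases top_edge hs hk h he hv with rfl | rfl
    · exact Or.inl ⟨(cOf_spec hs hk h hi).1.2 he, rfl⟩
    · exact Or.inr ⟨(cOf_spec hs hk h hi).2.2 he, rfl⟩
  · rintro ⟨i, hi, ⟨ha, rfl⟩ | ⟨hb, rfl⟩⟩
    · exact ⟨(cOf_spec hs hk h hi).1.1 ha, terminals_lvl ⟨i, hi, rfl⟩⟩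
    · exact ⟨(cOf_spec hs hk h hi).2.1 hb, terminals_lvl ⟨i, hi, rfl⟩⟩

theorem count_main {s : ℕ} (hs : 1 ≤ s) {k : ℕ → ℕ} (hk : ∀ i < s, 0 < k i)
    (d : ℤ) :
    {γ | IsLadderFace s k γ ∧ ldim γ = d}.ncard = ∑ c : Fin (s - 1) → Fin 3,
      {γ | IsLadderFace (2 * s - 1) (newk s c k) γ ∧ ldim γ = d - wsize s c}.ncard := by
  simp only [face_iff]
  have hn := n_pos hs hk
  have hfin : {γ | LF (nseq k s) (terminals s k) γ ∧ ldim γ = d}.Finite :=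
    (LF.finite _ _).subset fun γ h => h.1
  rw [Set.ncard_eq_toFinset_card _ hfin,
    Finset.card_eq_sum_card_fiberwise (f := cOf s k) (t := Finset.univ) (by simp)]
  refine Finset.sum_congr rfl fun c _ => ?_
  have hl := nseq_newk_last hs hk c
  have hcount := count (n := nseq (newk s c k) (2 * s - 1)) (T := terminals s k)
    (gw_fst hs hk c) (fun t ht => by rw [terminals_lvl ht, hl])
    (gw_step hs hk c) (gw_snd hs hk c) (gw_fin hs hk c) (wsize s c) (gw_card hs hk c) d
  rw [← hcount, hl, ← Set.ncard_coe_finset]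
  congr 1
  ext γ
  simp only [Finset.coe_filter, Set.Finite.mem_toFinset, Set.mem_setOf_eq]
  constructor
  · rintro ⟨h, rfl⟩
    exact ⟨h, top_eq hs hk h.1⟩
  · rintro ⟨h, h2⟩
    refine ⟨h, ?_⟩
    rw [top_eq hs hk h.1] at h2
    exact gw_inj hs hk h2


/-- Lemma 3.7. For `k ∈ ℤ^s_{≥1}`, the `f`-polynomial of the
ladder diagram `Γ_k` satisfies the recursion
`F_k(t) = Σ_{w ∈ W_{s-1}} t^{|w|} F_{r_w(k) * w̃}(t)`
(stated as an identity of the generating functions `Σ_d #{faces of dim d} t^d`;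
elements `w ∈ W_{s-1}` are encoded by `c : Fin (s-1) → Fin 3`). -/
theorem fpol_recursion (s : ℕ) (hs : 1 ≤ s) (k : ℕ → ℕ) (hk : ∀ i < s, 0 < k i) :
    fpol s k = ∑ c : Fin (s - 1) → Fin 3,
      (PowerSeries.X : PowerSeries ℤ) ^ wsize s c * fpol (2 * s - 1) (newk s c k) := by
  ext d
  simp only [map_sum, PowerSeries.coeff_X_pow_mul', fpol, PowerSeries.coeff_mk]
  rw [count_main hs hk]
  push_cast
  refine Finset.sum_congr rfl fun c _ => ?_
  split_ifs with h
  · rw [Nat.cast_sub h]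
  · have : {γ | IsLadderFace (2 * s - 1) (newk s c k) γ ∧ ldim γ = (d : ℤ) - wsize s c} = ∅ := by
      rw [Set.eq_empty_iff_forall_notMem]
      rintro γ ⟨h1, h2⟩
      have := ((face_iff _ _ _).1 h1).dim_nonneg
      omega
    rw [this]
    simp
end
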